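/- Let K be an infinite field, S = K[x_1,...,x_n], and fix an integer j. Let I ⊆ S and J ⊆ S be homogeneous ideals and let >_σ be any term order on the monomials of S. Then for a general change of coordinates h ∈ GL_n(K), one has dim_K Tor_i^S(S/I, S/h(J))_j ≤ dim_K Tor_i^S(S/in_σ(I), S/h(J))_j for all i ≥ 0. -/

import Mathlib

open MvPolynomial TensorProduct CategoryTheory

noncomputable section

/-- The polynomial ring `S = K[x_1,...,x_n]`, standard graded. -/
abbrev PS (K : Type) [Field K] (n : ℕ) : Type := MvPolynomial (Fin n) K

variable (K : Type) [Field K] (n : ℕ)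

/-- An ideal of `S` is homogeneous if it contains all homogeneous components of its
elements. -/
def IsHomog (I : Ideal (PS K n)) : Prop :=
  ∀ f ∈ I, ∀ d : ℕ, MvPolynomial.homogeneousComponent d f ∈ I

/-- The change of coordinates of `S` induced by `g ∈ GL_n(K)`, determined by
`g(x_i) = ∑_j g_{ji} x_j`. -/
def coordChange (g : GL (Fin n) K) : PS K n →ₐ[K] PS K n :=
  MvPolynomial.aeval (fun i => ∑ j, ((g : Matrix (Fin n) (Fin n) K) j i) • MvPolynomial.X j)

/-- A property `P` holds for a general change of coordinates `g ∈ GL_n(K)` if there is a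
nonempty Zariski open subset `U ⊆ GL_n(K)` on which it holds; equivalently (as `GL_n(K)` is
an irreducible variety over the infinite field `K`) there is a nonzero polynomial `F` in the
matrix entries such that `P g` holds whenever `F` does not vanish at `g`. -/
def generally (P : GL (Fin n) K → Prop) : Prop :=
  ∃ F : MvPolynomial (Fin n × Fin n) K, F ≠ 0 ∧
    ∀ g : GL (Fin n) K,
      MvPolynomial.eval (fun p => (g : Matrix (Fin n) (Fin n) K) p.1 p.2) F ≠ 0 → P g

/-- The standard grading of `S = K[x_1,...,x_n]`, extended to `ℤ` (zero in negative
degrees). -/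
def polyGrade (d : ℤ) : Submodule K (PS K n) :=
  if 0 ≤ d then homogeneousSubmodule (Fin n) K d.toNat else ⊥

/-- The degree `d` component of the (internal) tensor-product grading on `A ⊗[K] B`. -/
def tensorGrade {A B : Type} [AddCommGroup A] [Module K A] [AddCommGroup B] [Module K B]
    (GA : ℤ → Submodule K A) (GB : ℤ → Submodule K B) (d : ℤ) :
    Submodule K (A ⊗[K] B) :=
  ⨆ p : ℤ, LinearMap.range (TensorProduct.map (GA p).subtype (GB (d - p)).subtype)

variable (N : Type) [AddCommGroup N] [Module K N] [Module (PS K n) N]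
  [IsScalarTower K (PS K n) N]

/-- The tower of `K`-vector spaces `D_i = S^{⊗ i} ⊗_K N` appearing in the bar complex
`M ⊗_K S^{⊗ i} ⊗_K N`, which computes `Tor^S_i(M, N)`. -/
def barD : ℕ → ModuleCat K
  | 0 => ModuleCat.of K N
  | (i + 1) => ModuleCat.of K (PS K n ⊗[K] (barD i))

/-- The internal `ℤ`-grading on `D_i = S^{⊗ i} ⊗_K N` induced by the standard grading of
`S` and a grading `GN` of `N`. -/
def barDGrade (GN : ℤ → Submodule K N) : (i : ℕ) → ℤ → Submodule K (barD K n N i)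
  | 0 => GN
  | (i + 1) => tensorGrade K (polyGrade K n) (barDGrade GN i)

/-- Scalar multiplication `S → N → N` as a `K`-bilinear map. -/
def smulBilin : PS K n →ₗ[K] N →ₗ[K] N :=
  LinearMap.mk₂ K (fun s x => s • x)
    (fun s₁ s₂ x => add_smul s₁ s₂ x)
    (fun c s x => smul_assoc c s x)
    (fun s x y => smul_add s x y)
    (fun c s x => (smul_comm c s x).symm)

/-- The "contraction" part of the bar differential, `c_i : D_{i+1} → D_i`, defined
recursively by `c_0(s ⊗ x) = s • x` and
`c_{i+1}(s ⊗ s' ⊗ t) = (s s') ⊗ t - s ⊗ c_i(s' ⊗ t)`. -/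
def barC : (i : ℕ) → ((barD K n N (i + 1)) →ₗ[K] (barD K n N i))
  | 0 => TensorProduct.lift (smulBilin K n N)
  | (i + 1) =>
      (TensorProduct.map (LinearMap.mul' K (PS K n)) LinearMap.id).comp
        (TensorProduct.assoc K (PS K n) (PS K n) (barD K n N i)).symm.toLinearMap
      - TensorProduct.map LinearMap.id (barC i)

variable (M : Type) [AddCommGroup M] [Module K M] [Module (PS K n) M]
  [IsScalarTower K (PS K n) M]

/-- Right scalar multiplication `M ⊗[K] S → M` as a `K`-linear map. -/
def smulMapM : M ⊗[K] PS K n →ₗ[K] M :=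
  TensorProduct.lift (LinearMap.mk₂ K (fun m s => s • m)
    (fun m₁ m₂ s => smul_add s m₁ m₂)
    (fun c m s => smul_comm s c m)
    (fun m s₁ s₂ => add_smul s₁ s₂ m)
    (fun c m s => smul_assoc c s m))

/-- The bar differential `b_i : M ⊗ D_{i+1} → M ⊗ D_i`,
`b(m ⊗ s ⊗ t) = (s • m) ⊗ t - m ⊗ c_i(s ⊗ t)`.  The complex
`⋯ → M ⊗_K S^{⊗ i} ⊗_K N → ⋯ → M ⊗_K S ⊗_K N → M ⊗_K N → 0`
is the bar complex `M ⊗_S Bar(S, N)`, whose `i`-th homology is `Tor^S_i(M, N)`;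
it is a complex of graded vector spaces with degree-preserving differentials. -/
def barB (i : ℕ) : (M ⊗[K] (barD K n N (i + 1))) →ₗ[K] (M ⊗[K] (barD K n N i)) :=
  (TensorProduct.map (smulMapM K n M) LinearMap.id).comp
      (TensorProduct.assoc K M (PS K n) (barD K n N i)).symm.toLinearMap
  - TensorProduct.map LinearMap.id (barC K n N i)

/-- `dim_K Tor_i^S(M, N)_j`, the dimension of the degree-`j` component of the graded module
`Tor_i^S(M, N)` for graded modules `M`, `N`: it is computed as the homology of the degree-`j`
strand of the bar complex, namely `dim (ker b_i)_j - dim (im b_{i+1})_j`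
(for `i = 0`, `dim (M ⊗_K N)_j - dim (im b_1)_j`). -/
def torStrandDim (GM : ℤ → Submodule K M) (GN : ℤ → Submodule K N) : ℕ → ℤ → ℕ
  | 0, j =>
      Module.finrank K ↥(tensorGrade K GM (barDGrade K n N GN 0) j) -
        Module.finrank K
          ↥(LinearMap.range (barB K n N M 0) ⊓ tensorGrade K GM (barDGrade K n N GN 0) j)
  | (i + 1), j =>
      Module.finrank K
          ↥(LinearMap.ker (barB K n N M i) ⊓
              tensorGrade K GM (barDGrade K n N GN (i + 1)) j) -
        Module.finrank K
          ↥(LinearMap.range (barB K n N M (i + 1)) ⊓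
              tensorGrade K GM (barDGrade K n N GN (i + 1)) j)

/-- The quotient grading on `S/J`. -/
def quotGrade (J : Ideal (PS K n)) : ℤ → Submodule K (PS K n ⧸ J) := fun d =>
  (polyGrade K n d).map (Ideal.Quotient.mkₐ K J).toLinearMap

/-- The grading on an ideal `I ⊆ S` viewed as an `S`-module. -/
def idealGrade (I : Ideal (PS K n)) : ℤ → Submodule K ↥I := fun d =>
  (polyGrade K n d).comap ((Submodule.subtype I).restrictScalars K)

/-- `dim_K Tor_i^S(S/I, S/J)_j`. -/
def torQQ (I J : Ideal (PS K n)) (i : ℕ) (j : ℤ) : ℕ :=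
  torStrandDim K n (PS K n ⧸ J) (PS K n ⧸ I) (quotGrade K n I) (quotGrade K n J) i j

/-- `dim_K Tor_i^S(I, S/J)_j`. -/
def torIQ (I J : Ideal (PS K n)) (i : ℕ) (j : ℤ) : ℕ :=
  torStrandDim K n (PS K n ⧸ J) ↥I (idealGrade K n I) (quotGrade K n J) i j

/-- `a <_lex b` for the lexicographic order induced by `x_1 > x_2 > ⋯ > x_n`. -/
def lexLt (a b : Fin n →₀ ℕ) : Prop := Finsupp.Lex (· < ·) (· < ·) a b

/-- `a <_oplex b` for the (opposite) lexicographic order induced by `x_n > ⋯ > x_1`. -/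
def oplexLt (a b : Fin n →₀ ℕ) : Prop := Finsupp.Lex (· > ·) (· < ·) a b

/-- The total degree of an exponent vector. -/
def expDeg (m : Fin n →₀ ℕ) : ℕ := ∑ i, m i

/-- A monomial ideal: together with any polynomial it contains each of its monomials. -/
def IsMonomialIdeal (I : Ideal (PS K n)) : Prop :=
  ∀ f ∈ I, ∀ m ∈ f.support, MvPolynomial.monomial m (1 : K) ∈ I

/-- A lex ideal: a monomial ideal whose monomials form a lex set. -/
def IsLexIdeal (I : Ideal (PS K n)) : Prop :=
  IsMonomialIdeal K n I ∧ ∀ u v : Fin n →₀ ℕ, expDeg n u = expDeg n v →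
    MvPolynomial.monomial u (1 : K) ∈ I → lexLt n u v →
      MvPolynomial.monomial v (1 : K) ∈ I

/-- An opposite lex ideal: a monomial ideal whose monomials form an opposite lex set. -/
def IsOplexIdeal (I : Ideal (PS K n)) : Prop :=
  IsMonomialIdeal K n I ∧ ∀ u v : Fin n →₀ ℕ, expDeg n u = expDeg n v →
    MvPolynomial.monomial u (1 : K) ∈ I → oplexLt n u v →
      MvPolynomial.monomial v (1 : K) ∈ I

/-- The initial ideal `in_r(I)` of `I` with respect to a (strict) monomial order `r`:
the ideal generated by the `r`-maximal monomials of the nonzero elements of `I`. -/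
def initialIdealO (r : (Fin n →₀ ℕ) → (Fin n →₀ ℕ) → Prop) (I : Ideal (PS K n)) :
    Ideal (PS K n) :=
  Ideal.span {g | ∃ f ∈ I, ∃ m ∈ f.support,
    (∀ m' ∈ f.support, m' = m ∨ r m' m) ∧ g = MvPolynomial.monomial m (1 : K)}

section LinAlg

variable {K}

theorem exists_minor {X W ι : Type} [AddCommGroup X] [Module K X] [AddCommGroup W] [Module K W]
    (f : X →ₗ[K] W) (s : Set X) (b : Module.Basis ι K W) (C : Submodule K X)
    (hC : C = Submodule.span K s) [FiniteDimensional K C] :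
    ∃ x : Fin (Module.finrank K (C.map f)) → X, (∀ l, x l ∈ s) ∧
      ∃ k : Fin (Module.finrank K (C.map f)) → ι,
        (Matrix.of fun m l => b.repr (f (x l)) (k m)).det ≠ 0 := by
  classical
  have key : ∀ (V : Type) [AddCommGroup V] [Module K V] (t : Set V)
      [FiniteDimensional K (Submodule.span K t)] (r : ℕ),
      Module.finrank K (Submodule.span K t) = r →
      ∃ w : Fin r → V, (∀ l, w l ∈ t) ∧ LinearIndependent K w := by
    intro V _ _ t _ r hr
    obtain ⟨u, hut, hspan, hli⟩ := exists_linearIndependent K t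
    have hfd : FiniteDimensional K (Submodule.span K u) := by rw [hspan]; infer_instance
    let B : Module.Basis u K (Submodule.span K u) :=
      (Module.Basis.span hli).map (LinearEquiv.ofEq _ _ (by simp))
    have hfin : Finite u := Module.Finite.finite_basis B
    have hcard : Nat.card u = r := by
      rw [← hr, ← hspan]; exact (Module.finrank_eq_nat_card_basis B).symm
    let e : Fin r ≃ u := (Finite.equivFinOfCardEq hcard).symm
    exact ⟨fun l => (e l : V), fun l => hut (e l).2, hli.comp e e.injective⟩
  have hmap : C.map f = Submodule.span K (f '' s) := by
    rw [hC, Submodule.map_span]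
  have hfd2 : FiniteDimensional K (Submodule.span K (f '' s)) := by
    rw [← hmap]; infer_instance
  generalize hr : Module.finrank K (C.map f) = r
  rw [hmap] at hr
  obtain ⟨w, hw, hwli⟩ := key W (f '' s) r hr
  choose x hx hxw using hw
  refine ⟨x, hx, ?_⟩
  let A : ι → Fin r → K := fun k l => b.repr (w l) k
  have htop : Submodule.span K (Set.range A) = ⊤ := by
    by_contra hne
    obtain ⟨φ, hφ, hle⟩ := Submodule.exists_le_ker_of_lt_top _ (lt_top_iff_ne_top.mpr hne)
    apply hφ
    have hz : ∑ l, φ (Pi.single l 1) • w l = 0 := by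
      apply b.repr.injective
      ext k
      have h1 : A k ∈ LinearMap.ker φ := hle (Submodule.subset_span ⟨k, rfl⟩)
      rw [LinearMap.mem_ker, LinearMap.pi_apply_eq_sum_univ] at h1
      simp only [map_sum, map_smul, map_zero, Finsupp.coe_zero, Pi.zero_apply,
        Finsupp.finsetSum_apply, Finsupp.smul_apply, smul_eq_mul]
      rw [← h1]
      refine Finset.sum_congr rfl fun l _ => ?_
      simp only [A, smul_eq_mul]
      rw [mul_comm]
      congr 2
      ext m; simp [Pi.single_apply, eq_comm]
    have h0 := Fintype.linearIndependent_iff.mp hwli _ hz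
    apply LinearMap.pi_ext'
    intro l
    ext
    simpa using h0 l
  obtain ⟨v, hv, hvli⟩ := key (Fin r → K) (Set.range A) r (by rw [htop]; simp)
  choose k hk using hv
  refine ⟨k, ?_⟩
  have : (Matrix.of fun m l => b.repr (f (x l)) (k m)) = Matrix.of v := by
    ext m l
    simp only [Matrix.of_apply, ← hk, A, hxw]
  rw [this]
  have h2 : LinearIndependent K (Matrix.of v).row := hvli
  rw [Matrix.linearIndependent_rows_iff_isUnit, Matrix.isUnit_iff_isUnit_det] at h2
  exact h2.ne_zero

theorem le_finrank_map_of_det {X W : Type} [AddCommGroup X] [Module K X] [AddCommGroup W]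
    [Module K W] (f : X →ₗ[K] W) (C : Submodule K X) [FiniteDimensional K C] {r : ℕ}
    (x : Fin r → X) (hx : ∀ l, x l ∈ C) (φ : Fin r → W →ₗ[K] K)
    (hdet : (Matrix.of fun m l => φ m (f (x l))).det ≠ 0) :
    r ≤ Module.finrank K (C.map f) := by
  have h2 : LinearIndependent K (Matrix.of fun m l => φ m (f (x l))).col := by
    rw [Matrix.linearIndependent_cols_iff_isUnit, Matrix.isUnit_iff_isUnit_det]
    exact hdet.isUnit
  have h3 : LinearIndependent K fun l => f (x l) :=
    LinearIndependent.of_comp (LinearMap.pi φ) h2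
  have h4 : LinearIndependent K
      fun l => (⟨f (x l), Submodule.mem_map_of_mem (hx l)⟩ : C.map f) :=
    LinearIndependent.of_comp (C.map f).subtype h3
  simpa using h4.fintype_card_le_finrank

theorem finrank_ker_inf_add {X W : Type} [AddCommGroup X] [Module K X] [AddCommGroup W]
    [Module K W] (f : X →ₗ[K] W) (C : Submodule K X) [FiniteDimensional K C] :
    Module.finrank K ↥(LinearMap.ker f ⊓ C) + Module.finrank K (C.map f)
      = Module.finrank K C := by
  have h := (f.domRestrict C).finrank_range_add_finrank_ker
  rw [LinearMap.range_domRestrict, LinearMap.ker_domRestrict] at h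
  have e : Module.finrank K ↥((LinearMap.ker f).comap C.subtype)
      = Module.finrank K ↥(LinearMap.ker f ⊓ C) :=
    by
    rw [inf_comm, ← Submodule.map_comap_subtype]
    exact (LinearEquiv.finrank_eq (Submodule.equivMapOfInjective C.subtype
      C.subtype_injective _))
  omega

/-- A basis of homogeneous vectors adapted to a family of subspaces. -/
structure AdBasis {A : Type} [AddCommGroup A] [Module K A] (G : ℤ → Submodule K A)
    (ι : Type) (deg : ι → ℤ) where
  b : Module.Basis ι K A
  nonneg : ∀ i, 0 ≤ deg i
  fin : ∀ d, Set.Finite {i | deg i = d}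
  eq : ∀ d, G d = Submodule.span K (b '' {i | deg i = d})

namespace AdBasis

variable {A : Type} [AddCommGroup A] [Module K A] {G : ℤ → Submodule K A}
    {ι : Type} {deg : ι → ℤ}

theorem mem (h : AdBasis G ι deg) (i : ι) : h.b i ∈ G (deg i) := by
  rw [h.eq]; exact Submodule.subset_span ⟨i, rfl, rfl⟩

theorem fd (h : AdBasis G ι deg) (d : ℤ) : FiniteDimensional K (G d) := by
  rw [h.eq]
  exact FiniteDimensional.span_of_finite K ((h.fin d).image _)

theorem finrank_eq (h : AdBasis G ι deg) (d : ℤ) :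
    Module.finrank K (G d) = Nat.card {i | deg i = d} := by
  have hli : LinearIndependent K (fun i : {i | deg i = d} => h.b i) :=
    h.b.linearIndependent.comp _ Subtype.val_injective
  have e : G d = Submodule.span K (Set.range fun i : {i | deg i = d} => h.b i) := by
    rw [h.eq, Set.image_eq_range]
  rw [e]
  exact Module.finrank_eq_nat_card_basis (Module.Basis.span hli)

open Classical in
def proj (h : AdBasis G ι deg) (d : ℤ) : A →ₗ[K] A :=
  h.b.constr K fun i => if deg i = d then h.b i else 0

theorem proj_b (h : AdBasis G ι deg) (d : ℤ) (i : ι) [Decidable (deg i = d)] :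
    h.proj d (h.b i) = if deg i = d then h.b i else 0 := by
  rw [proj, Module.Basis.constr_basis]; congr

theorem proj_of_mem (h : AdBasis G ι deg) {d e : ℤ} {x : A} (hx : x ∈ G e) :
    h.proj d x = if e = d then x else 0 := by
  classical
  rw [h.eq] at hx
  induction hx using Submodule.span_induction with
  | mem x hx =>
    obtain ⟨i, hi, rfl⟩ := hx
    rw [proj_b, show deg i = e from hi]
  | zero => simp
  | add x y _ _ hx hy => rw [map_add, hx, hy]; split_ifs <;> simp
  | smul c x _ hx => rw [map_smul, hx]; split_ifs <;> simp

theorem proj_mem (h : AdBasis G ι deg) (d : ℤ) (x : A) : h.proj d x ∈ G d := by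
  classical
  have hx := h.b.mem_span x
  induction hx using Submodule.span_induction with
  | mem x hx =>
    obtain ⟨i, rfl⟩ := hx
    rw [proj_b]
    split_ifs with hd
    · exact hd ▸ h.mem i
    · exact Submodule.zero_mem _
  | zero => simp
  | add x y _ _ hx hy => rw [map_add]; exact Submodule.add_mem _ hx hy
  | smul c x _ hx => rw [map_smul]; exact Submodule.smul_mem _ _ hx

theorem range_inf {A' : Type} [AddCommGroup A'] [Module K A'] {G' : ℤ → Submodule K A'}
    {ι' : Type} {deg' : ι' → ℤ} (h : AdBasis G ι deg) (h' : AdBasis G' ι' deg')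
    (f : A →ₗ[K] A') (hf : ∀ d, ∀ x ∈ G d, f x ∈ G' d) (d : ℤ) :
    LinearMap.range f ⊓ G' d = (G d).map f := by
  classical
  apply le_antisymm
  · rintro _ ⟨⟨y, rfl⟩, hx⟩
    have hc : ∀ y, h'.proj d (f y) = f (h.proj d y) := by
      intro y
      have : (h'.proj d).comp f = f.comp (h.proj d) := by
        apply h.b.ext
        intro i
        simp only [LinearMap.comp_apply]
        rw [h'.proj_of_mem (hf _ _ (h.mem i)), proj_b]
        split_ifs <;> simp
      exact LinearMap.congr_fun this y
    refine ⟨h.proj d y, h.proj_mem d y, ?_⟩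
    rw [← hc, h'.proj_of_mem hx, if_pos rfl]
  · rintro _ ⟨y, hy, rfl⟩
    exact ⟨⟨y, rfl⟩, hf d y hy⟩

/-- Transport along a linear equivalence. -/
def map {A' : Type} [AddCommGroup A'] [Module K A'] {G' : ℤ → Submodule K A'}
    (h : AdBasis G ι deg) (e : A ≃ₗ[K] A') (he : ∀ d, G' d = (G d).map e.toLinearMap) :
    AdBasis G' ι deg where
  b := h.b.map e
  nonneg := h.nonneg
  fin := h.fin
  eq d := by
    rw [he, h.eq, Submodule.map_span, Set.image_image]
    rfl

def tensor {A' : Type} [AddCommGroup A'] [Module K A'] {G' : ℤ → Submodule K A'}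
    {ι' : Type} {deg' : ι' → ℤ} (h : AdBasis G ι deg) (h' : AdBasis G' ι' deg') :
    AdBasis (tensorGrade K G G') (ι × ι') (fun p => deg p.1 + deg' p.2) where
  b := h.b.tensorProduct h'.b
  nonneg p := add_nonneg (h.nonneg _) (h'.nonneg _)
  fin d := by
    refine Set.Finite.subset (s := ⋃ p ∈ Set.Icc (0 : ℤ) d,
      {i | deg i = p} ×ˢ {i | deg' i = d - p}) ?_ ?_
    · exact (Set.finite_Icc _ _).biUnion fun p _ => (h.fin p).prod (h'.fin _)
    · rintro ⟨i, i'⟩ hi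
      simp only [Set.mem_ofPred_eq] at hi
      have h1 := h.nonneg i
      have h2 := h'.nonneg i'
      simp only [Set.mem_iUnion, Set.mem_prod, Set.mem_ofPred_eq, Set.mem_Icc]
      exact ⟨deg i, ⟨h1, by omega⟩, rfl, by omega⟩
  eq d := by
    apply le_antisymm
    · apply iSup_le
      intro p
      rw [TensorProduct.range_map_eq_span_tmul, Submodule.span_le]
      rintro _ ⟨⟨x, hx⟩, ⟨y, hy⟩, rfl⟩
      simp only [Submodule.subtype_apply, SetLike.mem_coe]
      rw [h.eq] at hx
      rw [h'.eq] at hy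
      have := Submodule.apply_mem_map₂ (TensorProduct.mk K A A') hx hy
      rw [Submodule.map₂_span_span] at this
      refine Submodule.span_mono ?_ this
      rintro _ ⟨_, ⟨i, hi, rfl⟩, _, ⟨i', hi', rfl⟩, rfl⟩
      refine ⟨(i, i'), ?_, ?_⟩
      · simp only [Set.mem_ofPred_eq] at *; omega
      · simp [Module.Basis.tensorProduct_apply]
    · rw [Submodule.span_le]
      rintro _ ⟨⟨i, i'⟩, hi, rfl⟩
      simp only [Set.mem_ofPred_eq] at hi
      refine Submodule.mem_iSup_of_mem (deg i) ?_
      refine ⟨⟨h.b i, h.mem i⟩ ⊗ₜ ⟨h'.b i', ?_⟩, ?_⟩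
      · have := h'.mem i'
        rwa [show d - deg i = deg' i' by omega]
      · simp [Module.Basis.tensorProduct_apply]

end AdBasis
end LinAlg

section StdMon

variable {K} {n}

theorem degree_fiber_finite (d : ℤ) :
    Set.Finite {a : Fin n →₀ ℕ | ((Finsupp.degree a : ℕ) : ℤ) = d} := by
  refine Set.Finite.subset (Finset.finite_toSet
    (Finset.finsuppAntidiag (Finset.univ : Finset (Fin n)) d.toNat)) ?_
  intro a ha
  simp only [Set.mem_ofPred_eq] at ha
  simp only [SetLike.mem_coe, Finset.mem_finsuppAntidiag]
  refine ⟨?_, by simp⟩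
  rw [← ha, Finsupp.degree_eq_sum, Int.toNat_natCast]

theorem polyGrade_eq_span (d : ℤ) : polyGrade K n d =
    Submodule.span K ((fun a : Fin n →₀ ℕ => monomial a (1 : K)) ''
      {a | ((Finsupp.degree a : ℕ) : ℤ) = d}) := by
  unfold polyGrade
  split_ifs with h
  · rw [homogeneousSubmodule_eq_finsupp_supported]
    rw [AddMonoidAlgebra.supported_eq_span_single]
    have : {d_1 : Fin n →₀ ℕ | Finsupp.degree d_1 = d.toNat} = {a | ((Finsupp.degree a : ℕ) : ℤ) = d} := by
      ext a; simp only [Set.mem_ofPred_eq]; omega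
    rw [this]; rfl
  · rw [show {a : Fin n →₀ ℕ | ((Finsupp.degree a : ℕ) : ℤ) = d} = ∅ from ?_]
    · simp
    · ext a; simp; omega

variable (K n) in
def polyAd : AdBasis (polyGrade K n) (Fin n →₀ ℕ) (fun a => ((Finsupp.degree a : ℕ) : ℤ)) where
  b := basisMonomials (Fin n) K
  nonneg _ := Int.natCast_nonneg _
  fin := degree_fiber_finite
  eq d := by rw [polyGrade_eq_span]; simp

/-- `B` is a set of standard monomials for `I`. -/
structure StdFor (σ : MonomialOrder (Fin n)) (B : Set (Fin n →₀ ℕ)) (I : Ideal (PS K n)) :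
    Prop where
  indep : ∀ f ∈ I, (∀ m ∈ f.support, m ∈ B) → f = 0
  red : ∀ a, a ∉ B → ∃ f ∈ I, ∀ m ∈ (monomial a (1 : K) - f).support,
    σ.toSyn m < σ.toSyn a ∧ Finsupp.degree m = Finsupp.degree a

variable (K) in
def stdIncl (B : Set (Fin n →₀ ℕ)) : (B →₀ K) →ₗ[K] PS K n :=
  Finsupp.linearCombination K fun u : B => monomial (u : Fin n →₀ ℕ) (1 : K)

theorem stdIncl_single (B : Set (Fin n →₀ ℕ)) (u : B) (c : K) :
    stdIncl K B (Finsupp.single u c) = monomial (u : Fin n →₀ ℕ) c := by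
  simp [stdIncl, smul_monomial]

theorem coeff_stdIncl (B : Set (Fin n →₀ ℕ)) (v : B →₀ K) (u : B) :
    coeff (u : Fin n →₀ ℕ) (stdIncl K B v) = v u := by
  classical
  induction v using Finsupp.induction_linear with
  | zero => simp
  | add f g hf hg => simp [hf, hg]
  | single w c =>
    rw [stdIncl_single, coeff_monomial, Finsupp.single_apply]
    simp [Subtype.ext_iff]

theorem coeff_stdIncl_of_not_mem (B : Set (Fin n →₀ ℕ)) (v : B →₀ K) (u : Fin n →₀ ℕ)
    (hu : u ∉ B) : coeff u (stdIncl K B v) = 0 := by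
  classical
  induction v using Finsupp.induction_linear with
  | zero => simp
  | add f g hf hg => simp [hf, hg]
  | single w c =>
    rw [stdIncl_single, coeff_monomial, if_neg]
    rintro rfl
    exact hu w.2

namespace StdFor

variable {σ : MonomialOrder (Fin n)} {B : Set (Fin n →₀ ℕ)} {I : Ideal (PS K n)}

theorem exists_nf (h : StdFor σ B I) (a : Fin n →₀ ℕ) : ∃ v : B →₀ K,
    monomial a (1 : K) - stdIncl K B v ∈ I ∧
      ∀ u : B, v u ≠ 0 → σ.toSyn u ≤ σ.toSyn a ∧
        Finsupp.degree (u : Fin n →₀ ℕ) = Finsupp.degree a := by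
  classical
  have hwf : WellFounded fun a b : Fin n →₀ ℕ => σ.toSyn a < σ.toSyn b :=
    InvImage.wf σ.toSyn wellFounded_lt
  induction a using hwf.induction with
  | _ a ih =>
  by_cases ha : a ∈ B
  · refine ⟨Finsupp.single ⟨a, ha⟩ 1, ?_, ?_⟩
    · rw [stdIncl_single]; simp
    · intro u hu
      rw [Finsupp.single_apply] at hu
      have : ⟨a, ha⟩ = u := by by_contra hne; simp [hne] at hu
      subst this
      exact ⟨le_rfl, rfl⟩
  · obtain ⟨f, hf, hm⟩ := h.red a ha
    set g := monomial a (1 : K) - f with hg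
    have ih' : ∀ m : g.support, _ := fun m => ih m (hm m m.2).1
    choose v hv1 hv2 using ih'
    refine ⟨∑ m : g.support, coeff (m : Fin n →₀ ℕ) g • v m, ?_, ?_⟩
    · have e : monomial a (1 : K) - stdIncl K B (∑ m : g.support, coeff (m : Fin n →₀ ℕ) g • v m)
          = f + ∑ m : g.support, C (coeff (m : Fin n →₀ ℕ) g) *
              (monomial (m : Fin n →₀ ℕ) (1 : K) - stdIncl K B (v m)) := by
        have e1 : g = ∑ m : g.support, C (coeff (m : Fin n →₀ ℕ) g) *
              (monomial (m : Fin n →₀ ℕ) (1 : K)) := by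
          conv_lhs => rw [g.as_sum]
          rw [← Finset.sum_coe_sort]
          refine Finset.sum_congr rfl fun m _ => ?_
          rw [C_mul_monomial, mul_one]
        simp only [mul_sub, Finset.sum_sub_distrib]
        rw [← e1, map_sum]
        simp only [map_smul, ← C_mul']
        linear_combination -hg
      rw [e]
      exact I.add_mem hf (I.sum_mem fun m _ => I.mul_mem_left _ (hv1 m))
    · intro u hu
      rw [Finsupp.finsetSum_apply] at hu
      obtain ⟨m, _, hmu⟩ := Finset.exists_ne_zero_of_sum_ne_zero hu
      rw [Finsupp.smul_apply] at hmu
      have h1 := hv2 m u (right_ne_zero_of_smul hmu)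
      have h2 := hm m m.2
      exact ⟨h1.1.trans h2.1.le, h1.2.trans h2.2⟩

variable (I) in
def stdMap (B : Set (Fin n →₀ ℕ)) : (B →₀ K) →ₗ[K] (PS K n ⧸ I) :=
  (Ideal.Quotient.mkₐ K I).toLinearMap.comp (stdIncl K B)

theorem bij (h : StdFor σ B I) : Function.Bijective (stdMap I B) := by
  constructor
  · rw [← LinearMap.ker_eq_bot, LinearMap.ker_eq_bot']
    intro v hv
    have h1 : stdIncl K B v ∈ I := Ideal.Quotient.eq_zero_iff_mem.mp hv
    have h2 := h.indep _ h1 (by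
      intro m hm
      by_contra hB
      exact (mem_support_iff.mp hm) (coeff_stdIncl_of_not_mem B v m hB))
    ext u
    rw [← coeff_stdIncl, h2]; simp
  · intro x
    obtain ⟨f, rfl⟩ := Ideal.Quotient.mk_surjective x
    rw [← LinearMap.mem_range]
    induction f using MvPolynomial.induction_on' with
    | monomial a c =>
      obtain ⟨v, hv, _⟩ := h.exists_nf a
      refine ⟨c • v, ?_⟩
      rw [map_smul]
      have : stdMap I B v = Ideal.Quotient.mk I (monomial a 1) :=
        (Ideal.Quotient.eq.mpr hv).symm
      rw [this, ← Ideal.Quotient.mkₐ_eq_mk K, ← map_smul, smul_monomial]; simp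
    | add p q hp hq => rw [map_add]; exact Submodule.add_mem _ hp hq

def basis (h : StdFor σ B I) : Module.Basis B K (PS K n ⧸ I) :=
  Module.Basis.ofRepr (LinearEquiv.ofBijective (stdMap I B) h.bij).symm

theorem basis_apply (h : StdFor σ B I) (u : B) :
    h.basis u = Ideal.Quotient.mk I (monomial (u : Fin n →₀ ℕ) 1) := by
  rw [basis, Module.Basis.coe_ofRepr]
  simp [stdMap, stdIncl_single]

theorem repr_eq (h : StdFor σ B I) (x : PS K n) (v : B →₀ K) (hv : x - stdIncl K B v ∈ I) :
    h.basis.repr (Ideal.Quotient.mk I x) = v := by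
  rw [Ideal.Quotient.eq.mpr hv]
  exact (LinearEquiv.ofBijective (stdMap I B) h.bij).symm_apply_apply v

theorem repr_self (h : StdFor σ B I) (u : B) :
    h.basis.repr (Ideal.Quotient.mk I (monomial (u : Fin n →₀ ℕ) 1)) = Finsupp.single u 1 := by
  rw [← h.basis_apply, Module.Basis.repr_self]

theorem repr_ne (h : StdFor σ B I) (a : Fin n →₀ ℕ) (u : B)
    (hu : h.basis.repr (Ideal.Quotient.mk I (monomial a 1)) u ≠ 0) :
    σ.toSyn u ≤ σ.toSyn a ∧ Finsupp.degree (u : Fin n →₀ ℕ) = Finsupp.degree a := by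
  obtain ⟨v, hv, h2⟩ := h.exists_nf a
  rw [h.repr_eq _ v hv] at hu
  exact h2 u hu

def ad (h : StdFor σ B I) : AdBasis (quotGrade K n I) B
    (fun a => ((Finsupp.degree (a : Fin n →₀ ℕ) : ℕ) : ℤ)) where
  b := h.basis
  nonneg _ := Int.natCast_nonneg _
  fin d := (degree_fiber_finite d).preimage Subtype.val_injective.injOn
  eq d := by
    unfold quotGrade
    rw [polyGrade_eq_span, Submodule.map_span]
    apply le_antisymm
    · rw [Submodule.span_le]
      rintro _ ⟨_, ⟨a, ha, rfl⟩, rfl⟩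
      change Ideal.Quotient.mk I (monomial a 1) ∈ _
      rw [← h.basis.linearCombination_repr (Ideal.Quotient.mk I (monomial a 1))]
      refine Submodule.sum_mem _ fun u hu => Submodule.smul_mem _ _ (Submodule.subset_span ?_)
      refine ⟨u, ?_, rfl⟩
      have := (h.repr_ne a u (Finsupp.mem_support_iff.mp hu)).2
      simp only [Set.mem_ofPred_eq] at ha ⊢
      rw [this, ha]
    · apply Submodule.span_mono
      rintro _ ⟨u, hu, rfl⟩
      rw [h.basis_apply]
      exact ⟨_, ⟨u, hu, rfl⟩, rfl⟩

end StdFor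

def stdSet (σ : MonomialOrder (Fin n)) (I : Ideal (PS K n)) : Set (Fin n →₀ ℕ) :=
  {a | monomial a (1 : K) ∉ initialIdealO K n (fun a b => σ.toSyn a < σ.toSyn b) I}

theorem mem_initial_iff (σ : MonomialOrder (Fin n)) (I : Ideal (PS K n)) (g : PS K n) :
    g ∈ initialIdealO K n (fun a b => σ.toSyn a < σ.toSyn b) I ↔
      ∀ a ∈ g.support, ∃ f ∈ I, ∃ m ∈ f.support,
        (∀ m' ∈ f.support, m' = m ∨ σ.toSyn m' < σ.toSyn m) ∧ m ≤ a := by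
  have e : {g : PS K n | ∃ f ∈ I, ∃ m ∈ f.support,
    (∀ m' ∈ f.support, m' = m ∨ σ.toSyn m' < σ.toSyn m) ∧ g = monomial m (1 : K)} =
      (fun m => monomial m (1 : K)) '' {m | ∃ f ∈ I, m ∈ f.support ∧
        (∀ m' ∈ f.support, m' = m ∨ σ.toSyn m' < σ.toSyn m)} := by
    ext g
    constructor
    · rintro ⟨f, hf, m, hm, h, rfl⟩
      exact ⟨m, ⟨f, hf, hm, h⟩, rfl⟩
    · rintro ⟨m, ⟨f, hf, hm, h⟩, rfl⟩
      exact ⟨f, hf, m, hm, h, rfl⟩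
  unfold initialIdealO
  rw [e, mem_ideal_span_monomial_image]
  refine forall₂_congr fun a _ => ?_
  constructor
  · rintro ⟨m, ⟨f, hf, hm, h⟩, hma⟩
    exact ⟨f, hf, m, hm, h, hma⟩
  · rintro ⟨f, hf, m, hm, h, hma⟩
    exact ⟨m, ⟨f, hf, hm, h⟩, hma⟩

theorem stdFor_initial (σ : MonomialOrder (Fin n)) (I : Ideal (PS K n)) :
    StdFor σ (stdSet σ I) (initialIdealO K n (fun a b => σ.toSyn a < σ.toSyn b) I) where
  indep f hf hB := by
    classical
    by_contra h0
    obtain ⟨m, hm⟩ := support_nonempty.mpr h0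
    apply hB m hm
    rw [mem_initial_iff] at hf ⊢
    intro a ha
    rw [support_monomial, if_neg one_ne_zero, Finset.mem_singleton] at ha
    subst ha
    exact hf a hm
  red a ha := by
    refine ⟨monomial a 1, not_not.mp ha, ?_⟩
    simp

theorem stdFor_self (σ : MonomialOrder (Fin n)) (I : Ideal (PS K n)) (hI : IsHomog K n I) :
    StdFor σ (stdSet σ I) I where
  indep f hf hB := by
    classical
    by_contra h0
    obtain ⟨m, hm, hmax⟩ := Finset.exists_max_image f.support σ.toSyn (support_nonempty.mpr h0)
    apply hB m hm
    apply Ideal.subset_span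
    refine ⟨f, hf, m, hm, fun m' hm' => ?_, rfl⟩
    rcases (hmax m' hm').lt_or_eq with h | h
    · exact Or.inr h
    · exact Or.inl (σ.toSyn.injective h)
  red a ha := by
    classical
    have ha' := (mem_initial_iff σ I _).mp (not_not.mp ha) a
      (by rw [support_monomial, if_neg one_ne_zero]; simp)
    obtain ⟨f, hf, m, hm, hmax, hma⟩ := ha'
    obtain ⟨c, rfl⟩ := exists_add_of_le hma
    have hfm : coeff m f ≠ 0 := mem_support_iff.mp hm
    refine ⟨monomial c ((coeff m f)⁻¹) * homogeneousComponent (Finsupp.degree m) f,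
      I.mul_mem_left _ (hI f hf _), ?_⟩
    intro b hb
    rw [mem_support_iff, coeff_sub, coeff_monomial, coeff_monomial_mul'] at hb
    by_cases hcb : c ≤ b
    · obtain ⟨d, rfl⟩ := exists_add_of_le hcb
      rw [if_pos hcb, add_tsub_cancel_left, coeff_homogeneousComponent] at hb
      have hdm : d ≠ m := by
        rintro rfl
        rw [if_pos (add_comm _ _), if_pos rfl, inv_mul_cancel₀ hfm, sub_self] at hb
        exact hb rfl
      rw [if_neg (by rw [add_comm m c]; intro h; exact hdm (add_left_cancel h).symm)] at hb
      have hdd : Finsupp.degree d = Finsupp.degree m := by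
        by_contra hne
        rw [if_neg hne] at hb; simp at hb
      rw [if_pos hdd] at hb
      have hd : d ∈ f.support := by
        rw [mem_support_iff]; intro h0; rw [h0] at hb; simp at hb
      rcases hmax d hd with h | h
      · exact absurd h hdm
      · refine ⟨?_, ?_⟩
        · rw [map_add, map_add, add_comm]; exact add_lt_add_left h _
        · rw [map_add, map_add, hdd, add_comm]
    · rw [if_neg hcb, if_neg, sub_self] at hb
      · exact absurd rfl hb
      · rintro rfl; exact hcb le_add_self

end StdMon

section Generic

variable {K} {n}

theorem coeff_prod_low (σ : MonomialOrder (Fin n)) {ι : Type} (s : Finset ι)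
    (p : ι → PS K n) (u : ι → Fin n →₀ ℕ)
    (hp : ∀ k ∈ s, ∀ a ∈ (p k).support, σ.toSyn (u k) ≤ σ.toSyn a) :
    (∀ a ∈ (∏ k ∈ s, p k).support, σ.toSyn (∑ k ∈ s, u k) ≤ σ.toSyn a) ∧
      coeff (∑ k ∈ s, u k) (∏ k ∈ s, p k) = ∏ k ∈ s, coeff (u k) (p k) := by
  classical
  induction s using Finset.induction_on with
  | empty => simp
  | insert k s hk ih =>
    obtain ⟨ih1, ih2⟩ := ih fun k' hk' => hp k' (Finset.mem_insert_of_mem hk')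
    have hpk := hp k (Finset.mem_insert_self _ _)
    simp only [Finset.prod_insert hk, Finset.sum_insert hk]
    constructor
    · intro a ha
      have := support_mul _ _ ha
      obtain ⟨x, hx, y, hy, rfl⟩ := Finset.mem_add.mp this
      rw [map_add, map_add]
      exact add_le_add (hpk x hx) (ih1 y hy)
    · rw [← ih2, coeff_mul]
      rw [Finset.sum_eq_single (u k, ∑ k ∈ s, u k)]
      · rintro ⟨x, y⟩ hxy hne
        rw [Finset.HasAntidiagonal.mem_antidiagonal] at hxy
        simp only at hxy ⊢
        by_contra h0
        have hx := hpk x (mem_support_iff.mpr (left_ne_zero_of_mul h0))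
        have hy := ih1 y (mem_support_iff.mpr (right_ne_zero_of_mul h0))
        have hs : σ.toSyn x + σ.toSyn y = σ.toSyn (u k) + σ.toSyn (∑ k ∈ s, u k) := by
          rw [← map_add, ← map_add, hxy]
        have hx' : σ.toSyn (u k) = σ.toSyn x := by
          by_contra hne'
          have := add_lt_add_of_lt_of_le (lt_of_le_of_ne hx hne') hy
          exact this.ne hs.symm
        have hx'' := σ.toSyn.injective hx'
        apply hne
        subst hx''
        rw [add_left_cancel hxy]
      · intro h
        exact absurd (by rw [Finset.HasAntidiagonal.mem_antidiagonal]) h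

theorem coeff_det_low (σ : MonomialOrder (Fin n)) {r : ℕ}
    (P : Matrix (Fin r) (Fin r) (PS K n)) (u : Fin r → Fin n →₀ ℕ)
    (hp : ∀ k l, ∀ a ∈ (P k l).support, σ.toSyn (u k) ≤ σ.toSyn a) :
    coeff (∑ k, u k) P.det = (Matrix.of fun k l => coeff (u k) (P k l)).det := by
  rw [Matrix.det_apply, Matrix.det_apply, coeff_sum]
  refine Finset.sum_congr rfl fun τ _ => ?_
  have := (coeff_prod_low σ Finset.univ (fun i => P (τ i) i) (fun i => u (τ i))
    (fun i _ => hp (τ i) i)).2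
  rw [Equiv.sum_comp τ u] at this
  simp only [Matrix.of_apply]
  rw [← this]
  rcases Int.units_eq_one_or (Equiv.Perm.sign τ) with h | h <;> rw [h] <;> simp

/-- The substitution attached to an arbitrary matrix. -/
def coordM (A : Matrix (Fin n) (Fin n) K) : PS K n →ₐ[K] PS K n :=
  MvPolynomial.aeval (fun i => ∑ j, (A j i) • MvPolynomial.X j)

theorem coordM_comp (A A' : Matrix (Fin n) (Fin n) K) :
    (coordM A).comp (coordM A') = coordM (A * A') := by
  apply MvPolynomial.algHom_ext
  intro i
  simp only [coordM, AlgHom.comp_apply, aeval_X, map_sum, map_smul, Matrix.mul_apply,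
    Finset.sum_smul, Finset.smul_sum]
  rw [Finset.sum_comm]
  refine Finset.sum_congr rfl fun j _ => Finset.sum_congr rfl fun k _ => ?_
  rw [smul_smul, mul_comm]

theorem coordM_one : coordM (1 : Matrix (Fin n) (Fin n) K) = AlgHom.id K _ := by
  apply MvPolynomial.algHom_ext
  intro i
  simp [coordM, Matrix.one_apply]

theorem coordM_diagonal_monomial (T : Fin n → K) (a : Fin n →₀ ℕ) (c : K) :
    coordM (Matrix.diagonal T) (monomial a c) = (eval T (monomial a 1)) • monomial a c := by
  have hX : ∀ i, coordM (Matrix.diagonal T) (X i) = C (T i) * X i := by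
    intro i
    simp [coordM, Matrix.diagonal_apply, C_mul']
  have h1 : coordM (Matrix.diagonal T) (monomial a c) =
      C c * ∏ i ∈ a.support, (C (T i) * X i) ^ a i := by
    rw [monomial_eq, map_mul, Finsupp.prod, map_prod, ← algebraMap_eq, AlgHom.commutes]
    simp only [map_pow, hX, algebraMap_eq]
  have h2 : MvPolynomial.eval T (monomial a (1 : K)) = ∏ i ∈ a.support, T i ^ a i := by
    rw [eval_monomial, one_mul, Finsupp.prod]
  rw [h1, h2, monomial_eq, Finsupp.prod, smul_eq_C_mul, map_prod]
  simp only [map_pow, mul_pow, Finset.prod_mul_distrib]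
  ring

section defs
variable (M : Type) [AddCommGroup M] [Module K M] [Module (PS K n) M]
  [IsScalarTower K (PS K n) M]

/-- The twisted action map `m ⊗ s ↦ A(s) • m`. -/
def actM (A : Matrix (Fin n) (Fin n) K) : M ⊗[K] PS K n →ₗ[K] M :=
  (smulMapM K n M).comp (TensorProduct.map LinearMap.id (coordM A).toLinearMap)

variable {M} in
@[simp] theorem actM_tmul (A : Matrix (Fin n) (Fin n) K) (m : M) (s : PS K n) :
    actM M A (m ⊗ₜ s) = coordM A s • m := rfl

end defs

section defs2
variable {M : Type} [AddCommGroup M] [Module K M]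
variable {Y : Type} [AddCommGroup Y] [Module K Y]

/-- The twisted bar differential. -/
def bG (μ : M ⊗[K] PS K n →ₗ[K] M) (c : PS K n ⊗[K] Y →ₗ[K] Y) :
    M ⊗[K] (PS K n ⊗[K] Y) →ₗ[K] M ⊗[K] Y :=
  (TensorProduct.map μ LinearMap.id).comp
      (TensorProduct.assoc K M (PS K n) Y).symm.toLinearMap
  - TensorProduct.map LinearMap.id c

@[simp] theorem bG_tmul (μ : M ⊗[K] PS K n →ₗ[K] M) (c : PS K n ⊗[K] Y →ₗ[K] Y)
    (m : M) (s : PS K n) (y : Y) :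
    bG μ c (m ⊗ₜ (s ⊗ₜ y)) = μ (m ⊗ₜ s) ⊗ₜ y - m ⊗ₜ c (s ⊗ₜ y) := rfl

end defs2

section poly
variable {M : Type} [AddCommGroup M] [Module K M] [Module (PS K n) M]
  [IsScalarTower K (PS K n) M]

theorem poly_act (s : PS K n) (m : M) : ∀ (φ : M →ₗ[K] K), ∃ Q : MvPolynomial (Fin n × Fin n) K,
    ∀ A : Matrix (Fin n) (Fin n) K, eval (fun p => A p.1 p.2) Q = φ (coordM A s • m) := by
  induction s using MvPolynomial.induction_on with
  | C a =>
    intro φ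
    refine ⟨C (φ (a • m)), fun A => ?_⟩
    rw [eval_C, ← algebraMap_eq, AlgHom.commutes, algebraMap_smul]
  | add p q hp hq =>
    intro φ
    obtain ⟨Q1, h1⟩ := hp φ
    obtain ⟨Q2, h2⟩ := hq φ
    exact ⟨Q1 + Q2, fun A => by rw [eval_add, h1, h2, map_add, add_smul, map_add]⟩
  | mul_X p i hp =>
    intro φ
    have hl : ∀ j : Fin n, ∃ ψ : M →ₗ[K] K, ∀ x, ψ x = φ ((X j : PS K n) • x) := fun j =>
      ⟨φ.comp (smulBilin K n M (X j)), fun x => rfl⟩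
    choose ψ hψ using hl
    choose Q hQ using fun j => hp (ψ j)
    refine ⟨∑ j, X (j, i) * Q j, fun A => ?_⟩
    simp only [map_sum, eval_X, hQ, hψ, map_mul]
    rw [show coordM A (X i) = ∑ j, (A j i) • X j by simp [coordM]]
    rw [Finset.mul_sum, Finset.sum_smul, map_sum]
    refine Finset.sum_congr rfl fun j _ => ?_
    rw [mul_smul_comm, smul_assoc, φ.map_smul, smul_eq_mul, mul_comm (coordM A p), mul_smul]

variable {Y : Type} [AddCommGroup Y] [Module K Y]

theorem poly_bG (c : PS K n ⊗[K] Y →ₗ[K] Y) (φ : M ⊗[K] Y →ₗ[K] K)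
    (x : M ⊗[K] (PS K n ⊗[K] Y)) : ∃ Q : MvPolynomial (Fin n × Fin n) K,
    ∀ A : Matrix (Fin n) (Fin n) K, eval (fun p => A p.1 p.2) Q = φ (bG (actM M A) c x) := by
  have hadd : ∀ x y : M ⊗[K] (PS K n ⊗[K] Y),
     (∃ Q : MvPolynomial (Fin n × Fin n) K,
    ∀ A : Matrix (Fin n) (Fin n) K, eval (fun p => A p.1 p.2) Q = φ (bG (actM M A) c x)) →
     (∃ Q : MvPolynomial (Fin n × Fin n) K,
    ∀ A : Matrix (Fin n) (Fin n) K, eval (fun p => A p.1 p.2) Q = φ (bG (actM M A) c y)) →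
     (∃ Q : MvPolynomial (Fin n × Fin n) K,
    ∀ A : Matrix (Fin n) (Fin n) K, eval (fun p => A p.1 p.2) Q = φ (bG (actM M A) c (x + y))) := by
    rintro x y ⟨Q1, h1⟩ ⟨Q2, h2⟩
    exact ⟨Q1 + Q2, fun A => by rw [eval_add, h1, h2, map_add, map_add]⟩
  induction x using TensorProduct.induction_on with
  | zero => exact ⟨0, by simp⟩
  | add x y hx hy => exact hadd x y hx hy
  | tmul m z =>
    induction z using TensorProduct.induction_on with
    | zero => exact ⟨0, by simp⟩
    | add x y hx hy => rw [TensorProduct.tmul_add]; exact hadd _ _ hx hy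
    | tmul s y =>
      obtain ⟨Q, hQ⟩ := poly_act s m (φ.comp ((TensorProduct.mk K M Y).flip y))
      refine ⟨Q - C (φ (m ⊗ₜ c (s ⊗ₜ y))), fun A => ?_⟩
      rw [eval_sub, hQ, eval_C, bG_tmul, map_sub, actM_tmul]
      rfl

end poly

section low
variable {σ : MonomialOrder (Fin n)} {B : Set (Fin n →₀ ℕ)} {I I' : Ideal (PS K n)}

/-- The polynomial in the torus parameters describing a coefficient of a normal form. -/
def lowPoly (h : StdFor σ B I) (q : PS K n) (u : B) : PS K n :=
  ∑ a ∈ q.support, monomial a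
        (coeff a q * h.basis.repr (Ideal.Quotient.mk I (monomial a 1)) u)

theorem coeff_lowPoly (h : StdFor σ B I) (q : PS K n) (u : B) (a : Fin n →₀ ℕ) :
    coeff a (lowPoly h q u) =
      coeff a q * h.basis.repr (Ideal.Quotient.mk I (monomial a 1)) u := by
  classical
  unfold lowPoly
  rw [coeff_sum]
  simp only [coeff_monomial]
  rw [Finset.sum_ite_eq']
  split_ifs with ha
  · rfl
  · rw [notMem_support_iff.mp ha, zero_mul]

theorem repr_diag (h : StdFor σ B I) (q : PS K n) (u : B) (T : Fin n → K) :
    h.basis.repr (Ideal.Quotient.mk I (coordM (Matrix.diagonal T) q)) u =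
      MvPolynomial.eval T (lowPoly h q u) := by
  conv_lhs => rw [q.as_sum]
  unfold lowPoly
  simp only [map_sum, Finsupp.finsetSum_apply]
  refine Finset.sum_congr rfl fun a _ => ?_
  rw [coordM_diagonal_monomial, ← Ideal.Quotient.mkₐ_eq_mk K, map_smul, map_smul,
    show monomial a (coeff a q) = coeff a q • monomial a (1 : K) by rw [smul_monomial]; simp,
    map_smul, map_smul,
    show monomial a (coeff a q * (h.basis.repr ((Ideal.Quotient.mkₐ K I) (monomial a 1))) u)
      = (coeff a q * (h.basis.repr ((Ideal.Quotient.mkₐ K I) (monomial a 1))) u) •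
        monomial a (1 : K) by rw [smul_monomial]; simp, smul_eval]
  simp only [Finsupp.smul_apply, smul_eq_mul]
  ring

theorem repr_init (h' : StdFor σ B I')
    (hI' : ∀ a, a ∉ B → monomial a (1 : K) ∈ I') (q : PS K n) (u : B) :
    h'.basis.repr (Ideal.Quotient.mk I' q) u = coeff (u : Fin n →₀ ℕ) q := by
  classical
  induction q using MvPolynomial.induction_on' with
  | monomial a c =>
    rw [show monomial a c = c • monomial a (1 : K) by rw [smul_monomial]; simp,
      ← Ideal.Quotient.mkₐ_eq_mk K, map_smul, map_smul, coeff_smul, Finsupp.smul_apply]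
    congr 1
    by_cases ha : a ∈ B
    · have := h'.repr_self ⟨a, ha⟩
      rw [Ideal.Quotient.mkₐ_eq_mk]
      simp only at this
      rw [this, coeff_monomial, Finsupp.single_apply]
      simp [Subtype.ext_iff]
    · rw [Ideal.Quotient.mkₐ_eq_mk, Ideal.Quotient.eq_zero_iff_mem.mpr (hI' a ha), coeff_monomial,
        if_neg]
      · simp
      · rintro rfl; exact ha u.2
  | add p q hp hq => simp [hp, hq]

variable {Y : Type} [AddCommGroup Y] [Module K Y] {κ : Type} (d : Module.Basis κ K Y)

theorem low_bG (h : StdFor σ B I) (h' : StdFor σ B I')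
    (hI' : ∀ a, a ∉ B → monomial a (1 : K) ∈ I') (c : PS K n ⊗[K] Y →ₗ[K] Y)
    (A : Matrix (Fin n) (Fin n) K) (v u : B) (k : κ) (y : PS K n ⊗[K] Y) :
    ∃ p : PS K n, (∀ a ∈ p.support, σ.toSyn u ≤ σ.toSyn a) ∧
      coeff (u : Fin n →₀ ℕ) p = (h'.basis.tensorProduct d).repr
        (bG (actM (PS K n ⧸ I') A) c (h'.basis v ⊗ₜ y)) (u, k) ∧
      ∀ T : Fin n → K, eval T p = eval T (monomial (v : Fin n →₀ ℕ) 1) *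
        (h.basis.tensorProduct d).repr
        (bG (actM (PS K n ⧸ I) (Matrix.diagonal T * A)) c (h.basis v ⊗ₜ y)) (u, k) := by
  classical
  induction y using TensorProduct.induction_on with
  | zero => exact ⟨0, by simp⟩
  | add y z hy hz =>
    obtain ⟨p1, h1, h2, h3⟩ := hy
    obtain ⟨q1, g1, g2, g3⟩ := hz
    refine ⟨p1 + q1, ?_, ?_, ?_⟩
    · intro a ha
      rcases Finset.mem_union.mp (support_add ha) with hh | hh
      · exact h1 a hh
      · exact g1 a hh
    · rw [coeff_add, h2, g2, TensorProduct.tmul_add, map_add, map_add, Finsupp.add_apply]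
    · intro T
      rw [eval_add, h3, g3, TensorProduct.tmul_add, map_add, map_add, Finsupp.add_apply, mul_add]
  | tmul s y =>
    set q := coordM A s * monomial (v : Fin n →₀ ℕ) (1 : K) with hq
    refine ⟨C (d.repr y k) * lowPoly h q u -
        if v = u then monomial (u : Fin n →₀ ℕ) (d.repr (c (s ⊗ₜ y)) k) else 0, ?_, ?_, ?_⟩
    · intro a ha
      rw [mem_support_iff, coeff_sub, coeff_C_mul, coeff_lowPoly] at ha
      by_contra hlt
      apply ha
      have h1 : h.basis.repr (Ideal.Quotient.mk I (monomial a 1)) u = 0 := by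
        by_contra h0
        exact hlt (h.repr_ne a u h0).1
      have h2 : (u : Fin n →₀ ℕ) ≠ a := by rintro rfl; exact hlt le_rfl
      rw [h1]
      split_ifs
      · simp [coeff_monomial, h2]
      · simp
    · rw [coeff_sub, coeff_C_mul, coeff_lowPoly, h.repr_self, bG_tmul, actM_tmul, map_sub,
        Finsupp.sub_apply, Module.Basis.tensorProduct_repr_tmul_apply,
        Module.Basis.tensorProduct_repr_tmul_apply, h'.basis.repr_self, h'.basis_apply]
      have e : coordM A s •
          (Ideal.Quotient.mk I') (monomial (v : Fin n →₀ ℕ) 1) = Ideal.Quotient.mk I' q := by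
        rw [hq, map_mul]; rfl
      rw [e, repr_init h' hI', Finsupp.single_eq_same, Finsupp.single_apply]
      split_ifs <;> simp
    · intro T
      rw [eval_sub, MvPolynomial.eval_mul, ← repr_diag, bG_tmul, actM_tmul, ← coordM_comp, map_sub,
        Finsupp.sub_apply,
        Module.Basis.tensorProduct_repr_tmul_apply, Module.Basis.tensorProduct_repr_tmul_apply,
        mul_sub, h.basis.repr_self, h.basis_apply, Finsupp.single_apply, eval_C]
      have e : Ideal.Quotient.mk I (coordM (Matrix.diagonal T) q) =
          MvPolynomial.eval T (monomial (v : Fin n →₀ ℕ) 1) •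
          ((((coordM (Matrix.diagonal T)).comp (coordM A)) s) •
          (Ideal.Quotient.mk I) (monomial (v : Fin n →₀ ℕ) 1)) := by
        rw [hq, map_mul, coordM_diagonal_monomial, map_mul, ← Ideal.Quotient.mkₐ_eq_mk K,
          map_smul, mul_smul_comm]
        rfl
      rw [e, map_smul, Finsupp.smul_apply]
      congr 1
      · simp only [smul_eq_mul]; ring
      · split_ifs with hvu
        · subst hvu; rw [eval_monomial, eval_monomial]; simp [mul_comm]
        · simp

theorem key_rank [Infinite K] (h : StdFor σ B I) (h' : StdFor σ B I')
    (hI' : ∀ a, a ∉ B → monomial a (1 : K) ∈ I') (c : PS K n ⊗[K] Y →ₗ[K] Y)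
    {GZ : ℤ → Submodule K (PS K n ⊗[K] Y)} {κZ : Type} {degZ : κZ → ℤ}
    (hZ : AdBasis GZ κZ degZ) (j : ℤ) :
    ∃ F : MvPolynomial (Fin n × Fin n) K, F ≠ 0 ∧ ∀ g : GL (Fin n) K,
      MvPolynomial.eval (fun p => (g : Matrix (Fin n) (Fin n) K) p.1 p.2) F ≠ 0 →
      ∀ g' : GL (Fin n) K,
        Module.finrank K ((tensorGrade K (quotGrade K n I') GZ j).map
            (bG (actM (PS K n ⧸ I') (g' : Matrix (Fin n) (Fin n) K)) c)) ≤
        Module.finrank K ((tensorGrade K (quotGrade K n I) GZ j).map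
            (bG (actM (PS K n ⧸ I) (g : Matrix (Fin n) (Fin n) K)) c)) := by
  classical
  let d := Module.Basis.ofVectorSpace K Y
  have fd1 := (h.ad.tensor hZ).fd j
  have fd2 := (h'.ad.tensor hZ).fd j
  -- the maximal rank on the initial side
  set rk : GL (Fin n) K → ℕ := fun g' =>
    Module.finrank K ((tensorGrade K (quotGrade K n I') GZ j).map
      (bG (actM (PS K n ⧸ I') (g' : Matrix (Fin n) (Fin n) K)) c)) with hrk
  obtain ⟨g0, hg0⟩ : ∃ g0, ∀ g', rk g' ≤ rk g0 := by
    have hb : BddAbove (Set.range rk) := by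
      refine ⟨Module.finrank K (tensorGrade K (quotGrade K n I') GZ j), ?_⟩
      rintro _ ⟨g', rfl⟩
      exact Submodule.finrank_map_le _ _
    obtain ⟨g0, hg0⟩ := Nat.sSup_mem (Set.range_nonempty rk) hb
    exact ⟨g0, fun g' => by rw [hg0]; exact le_csSup hb ⟨g', rfl⟩⟩
  obtain ⟨x, hx, k, hdet⟩ := exists_minor
    (bG (actM (PS K n ⧸ I') (g0 : Matrix (Fin n) (Fin n) K)) c) _
    (h'.basis.tensorProduct d) (tensorGrade K (quotGrade K n I') GZ j) ((h'.ad.tensor hZ).eq j)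
  change (Fin (rk g0)) → _ at x
  change (Fin (rk g0)) → _ at k
  choose q hq hqx using hx
  have hx' : ∀ l, x l = h'.basis (q l).1 ⊗ₜ hZ.b (q l).2 := by
    intro l
    rw [← hqx]
    exact Module.Basis.tensorProduct_apply ..
  choose p hp1 hp2 hp3 using fun m l => low_bG d h h' hI' c (g0 : Matrix (Fin n) (Fin n) K)
    (q l).1 (k m).1 (k m).2 (hZ.b (q l).2)
  have hP : (Matrix.of p).det ≠ 0 := by
    intro h0
    apply hdet
    have := coeff_det_low σ (Matrix.of p) (fun m => ((k m).1 : Fin n →₀ ℕ)) hp1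
    rw [h0, coeff_zero] at this
    rw [this]
    congr 1
    ext m l
    simp only [Matrix.of_apply]
    rw [hp2, hx']
  obtain ⟨T, hT1⟩ : ∃ T : Fin n → K, MvPolynomial.eval T (Matrix.of p).det ≠ 0 := by
    by_contra hcon
    push Not at hcon
    exact hP (MvPolynomial.funext fun T => by rw [hcon T, map_zero])
  set φ : Fin (rk g0) → ((PS K n ⧸ I) ⊗[K] Y →ₗ[K] K) :=
    fun m => (h.basis.tensorProduct d).coord (k m) with hφ
  set x1 : Fin (rk g0) → ((PS K n ⧸ I) ⊗[K] (PS K n ⊗[K] Y)) :=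
    fun l => h.basis (q l).1 ⊗ₜ hZ.b (q l).2 with hx1
  choose Q hQ using fun m l => poly_bG c (φ m) (x1 l)
  have hev : ∀ A : Matrix (Fin n) (Fin n) K,
      MvPolynomial.eval (fun p => A p.1 p.2) (Matrix.of Q).det =
        (Matrix.of fun m l => φ m (bG (actM (PS K n ⧸ I) A) c (x1 l))).det := by
    intro A
    rw [RingHom.map_det]
    congr 1
    ext m l
    simp [hQ]
  refine ⟨(Matrix.of Q).det, ?_, ?_⟩
  · intro h0
    have h1 := hev (Matrix.diagonal T * (g0 : Matrix (Fin n) (Fin n) K))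
    rw [h0, map_zero] at h1
    apply hT1
    rw [RingHom.map_det]
    have e : (MvPolynomial.eval T).mapMatrix (Matrix.of p) = Matrix.of fun m l =>
        MvPolynomial.eval T (monomial ((q l).1 : Fin n →₀ ℕ) 1) *
        (Matrix.of fun m l => φ m (bG (actM (PS K n ⧸ I)
          (Matrix.diagonal T * (g0 : Matrix (Fin n) (Fin n) K))) c (x1 l))) m l := by
      ext m l
      simp only [RingHom.mapMatrix_apply, Matrix.map_apply, Matrix.of_apply]
      rw [hp3]
      rfl
    rw [e, Matrix.det_mul_row, ← h1, mul_zero]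
  · intro g hg g'
    refine (hg0 g').trans ?_
    rw [hev] at hg
    refine le_finrank_map_of_det _ _ x1 (fun l => ?_) φ hg
    have := (h.ad.tensor hZ).mem (q l)
    rw [show _ = j from hq l] at this
    have e : (h.ad.tensor hZ).b (q l) = x1 l := Module.Basis.tensorProduct_apply ..
    rwa [e] at this

end low

end Generic

section Transport

variable {K} {n}

section abs
variable {A B A' B' : Type} [AddCommGroup A] [Module K A] [AddCommGroup B] [Module K B]
  [AddCommGroup A'] [Module K A'] [AddCommGroup B'] [Module K B']

theorem tmul_mem_tensorGrade {GA : ℤ → Submodule K A} {GB : ℤ → Submodule K B} {p q d : ℤ}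
    (hd : p + q = d) {a : A} {b : B} (ha : a ∈ GA p) (hb : b ∈ GB q) :
    a ⊗ₜ[K] b ∈ tensorGrade K GA GB d := by
  obtain rfl : q = d - p := by omega
  exact Submodule.mem_iSup_of_mem p ⟨(⟨a, ha⟩ : GA p) ⊗ₜ (⟨b, hb⟩ : GB (d - p)), rfl⟩

theorem tensorGrade_le {GA : ℤ → Submodule K A} {GB : ℤ → Submodule K B} {d : ℤ}
    {W : Submodule K (A ⊗[K] B)}
    (h : ∀ p q, p + q = d → ∀ a ∈ GA p, ∀ b ∈ GB q, a ⊗ₜ[K] b ∈ W) :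
    tensorGrade K GA GB d ≤ W := by
  refine iSup_le fun p => ?_
  rintro _ ⟨z, rfl⟩
  induction z using TensorProduct.induction_on with
  | zero => simp
  | tmul a b => exact h p (d - p) (by omega) _ a.2 _ b.2
  | add x y hx hy => rw [map_add]; exact W.add_mem hx hy

theorem tensorGrade_congr {GA : ℤ → Submodule K A} {GB : ℤ → Submodule K B}
    {GA' : ℤ → Submodule K A'} {GB' : ℤ → Submodule K B'} (e : A ≃ₗ[K] A') (e' : B ≃ₗ[K] B')
    (he : ∀ d, GA' d = (GA d).map e.toLinearMap) (he' : ∀ d, GB' d = (GB d).map e'.toLinearMap)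
    (d : ℤ) : tensorGrade K GA' GB' d =
      (tensorGrade K GA GB d).map (TensorProduct.congr e e').toLinearMap := by
  apply le_antisymm
  · refine tensorGrade_le fun p q hpq a ha b hb => ?_
    rw [he] at ha
    rw [he'] at hb
    obtain ⟨a, ha, rfl⟩ := ha
    obtain ⟨b, hb, rfl⟩ := hb
    exact ⟨a ⊗ₜ b, tmul_mem_tensorGrade hpq ha hb, rfl⟩
  · rw [Submodule.map_le_iff_le_comap]
    refine tensorGrade_le fun p q hpq a ha b hb => ?_
    refine tmul_mem_tensorGrade hpq ?_ ?_
    · rw [he]; exact ⟨a, ha, rfl⟩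
    · rw [he']; exact ⟨b, hb, rfl⟩

theorem finrank_range_inf_congr (f : A →ₗ[K] B) (f' : A' →ₗ[K] B') (e : A ≃ₗ[K] A')
    (e' : B ≃ₗ[K] B') (h : ∀ x, f' (e x) = e' (f x)) (C : Submodule K B) (C' : Submodule K B')
    (hC : C' = C.map e'.toLinearMap) :
    Module.finrank K ↥(LinearMap.range f' ⊓ C') = Module.finrank K ↥(LinearMap.range f ⊓ C) := by
  have : LinearMap.range f' ⊓ C' = (LinearMap.range f ⊓ C).map e'.toLinearMap := by
    ext y
    constructor
    · rintro ⟨⟨x, rfl⟩, hx⟩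
      rw [hC] at hx
      obtain ⟨z, hz, hzx⟩ := hx
      refine ⟨z, ⟨⟨e.symm x, ?_⟩, hz⟩, hzx⟩
      apply e'.injective
      rw [← h, e.apply_symm_apply]
      exact hzx.symm
    · rintro ⟨_, ⟨⟨x, rfl⟩, hx⟩, rfl⟩
      refine ⟨⟨e x, h x⟩, ?_⟩
      rw [hC]
      exact ⟨_, hx, rfl⟩
  rw [this]
  exact LinearEquiv.finrank_map_eq e' _

theorem finrank_ker_inf_congr (f : A →ₗ[K] B) (f' : A' →ₗ[K] B') (e : A ≃ₗ[K] A')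
    (e' : B ≃ₗ[K] B') (h : ∀ x, f' (e x) = e' (f x)) (C : Submodule K A) (C' : Submodule K A')
    (hC : C' = C.map e.toLinearMap) :
    Module.finrank K ↥(LinearMap.ker f' ⊓ C') = Module.finrank K ↥(LinearMap.ker f ⊓ C) := by
  have : LinearMap.ker f' ⊓ C' = (LinearMap.ker f ⊓ C).map e.toLinearMap := by
    ext y
    constructor
    · rintro ⟨hy, hx⟩
      rw [hC] at hx
      obtain ⟨z, hz, rfl⟩ := hx
      refine ⟨z, ⟨?_, hz⟩, rfl⟩
      have h2 : f' (e z) = 0 := hy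
      rw [h] at h2
      exact e'.map_eq_zero_iff.mp h2
    · rintro ⟨x, ⟨hx0, hx⟩, rfl⟩
      have h2 : f x = 0 := hx0
      refine ⟨?_, ?_⟩
      · change f' (e x) = 0
        rw [h, h2, map_zero]
      · rw [hC]
        exact ⟨_, hx, rfl⟩
  rw [this]
  exact LinearEquiv.finrank_map_eq e _

end abs

section abs2
variable {M M' Y Y' : Type} [AddCommGroup M] [Module K M] [AddCommGroup M'] [Module K M']
  [AddCommGroup Y] [Module K Y] [AddCommGroup Y'] [Module K Y']

theorem tens3_ext {W : Type} [AddCommGroup W] [Module K W]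
    {f g : M ⊗[K] (PS K n ⊗[K] Y) →ₗ[K] W}
    (h : ∀ m s y, f (m ⊗ₜ (s ⊗ₜ y)) = g (m ⊗ₜ (s ⊗ₜ y))) : f = g := by
  apply TensorProduct.ext
  apply LinearMap.ext
  intro m
  apply TensorProduct.ext'
  intro s y
  exact h m s y

theorem bG_congr (μ : M ⊗[K] PS K n →ₗ[K] M) (μ' : M' ⊗[K] PS K n →ₗ[K] M')
    (c : PS K n ⊗[K] Y →ₗ[K] Y) (c' : PS K n ⊗[K] Y' →ₗ[K] Y')
    (eM : M ≃ₗ[K] M') (e : PS K n ≃ₗ[K] PS K n) (θ : Y ≃ₗ[K] Y')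
    (hμ : ∀ m s, μ' (eM m ⊗ₜ e s) = eM (μ (m ⊗ₜ s)))
    (hc : ∀ z, c' (TensorProduct.congr e θ z) = θ (c z)) (z : M ⊗[K] (PS K n ⊗[K] Y)) :
    bG μ' c' (TensorProduct.congr eM (TensorProduct.congr e θ) z) =
      TensorProduct.congr eM θ (bG μ c z) := by
  have : (bG μ' c').comp (TensorProduct.congr eM (TensorProduct.congr e θ)).toLinearMap =
      (TensorProduct.congr eM θ).toLinearMap.comp (bG μ c) := by
    apply tens3_ext
    intro m s y
    have h2 := hc (s ⊗ₜ y)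
    simp only [LinearMap.comp_apply, LinearEquiv.coe_coe, congr_tmul, bG_tmul, map_sub, hμ] at h2 ⊢
    rw [h2]
  exact LinearMap.congr_fun this z

theorem bG_grade (μ : M ⊗[K] PS K n →ₗ[K] M) (c : PS K n ⊗[K] Y →ₗ[K] Y)
    {GM : ℤ → Submodule K M} {GY : ℤ → Submodule K Y}
    (hμ : ∀ p q, ∀ m ∈ GM p, ∀ s ∈ polyGrade K n q, μ (m ⊗ₜ s) ∈ GM (p + q))
    (hc : ∀ d, ∀ z ∈ tensorGrade K (polyGrade K n) GY d, c z ∈ GY d) (d : ℤ) :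
    ∀ z ∈ tensorGrade K GM (tensorGrade K (polyGrade K n) GY) d,
      bG μ c z ∈ tensorGrade K GM GY d := by
  have key : tensorGrade K GM (tensorGrade K (polyGrade K n) GY) d ≤
      (tensorGrade K GM GY d).comap (bG μ c) := by
    refine tensorGrade_le fun p q hpq m hm z hz => ?_
    have : tensorGrade K (polyGrade K n) GY q ≤
        ((tensorGrade K GM GY d).comap (bG μ c)).comap (TensorProduct.mk K M _ m) := by
      refine tensorGrade_le fun p' q' hpq' s hs y hy => ?_
      change bG μ c (m ⊗ₜ (s ⊗ₜ y)) ∈ tensorGrade K GM GY d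
      rw [bG_tmul]
      refine Submodule.sub_mem _ ?_ ?_
      · exact tmul_mem_tensorGrade (by omega) (hμ _ _ _ hm _ hs) hy
      · exact tmul_mem_tensorGrade hpq hm (hc _ _ (tmul_mem_tensorGrade hpq' hs hy))
    exact this hz
  exact key

end abs2

theorem polyGrade_mul (p q : ℤ) (s t : PS K n) (hs : s ∈ polyGrade K n p)
    (ht : t ∈ polyGrade K n q) : s * t ∈ polyGrade K n (p + q) := by
  unfold polyGrade at *
  split_ifs at hs with h1
  · split_ifs at ht with h2
    · rw [if_pos (by omega), Int.toNat_add h1 h2]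
      exact IsHomogeneous.mul hs ht
    · rw [(Submodule.mem_bot K).mp ht, mul_zero]; exact Submodule.zero_mem _
  · rw [(Submodule.mem_bot K).mp hs, zero_mul]; exact Submodule.zero_mem _

theorem quotGrade_smul (I : Ideal (PS K n)) (p q : ℤ) (m : PS K n ⧸ I)
    (hm : m ∈ quotGrade K n I p) (s : PS K n)
    (hs : s ∈ polyGrade K n q) : s • m ∈ quotGrade K n I (p + q) := by
  obtain ⟨f, hf, rfl⟩ := hm
  refine ⟨s * f, ?_, rfl⟩
  rw [add_comm]
  exact polyGrade_mul _ _ _ _ hs hf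

theorem coordM_grade (A : Matrix (Fin n) (Fin n) K) (d : ℤ) (s : PS K n)
    (hs : s ∈ polyGrade K n d) : coordM A s ∈ polyGrade K n d := by
  unfold polyGrade at *
  split_ifs at hs ⊢ with h1
  · have h2 : IsHomogeneous s d.toNat := hs
    have := IsHomogeneous.aeval h2 (fun i => ∑ j, (A j i) • (X j : PS K n)) (n := 1)
      fun i => IsHomogeneous.sum _ _ _ fun j _ => by
        rw [smul_eq_C_mul]; simpa using (isHomogeneous_C (Fin n) (A j i)).mul (isHomogeneous_X K j)
    rw [one_mul] at this
    exact this
  · rw [(Submodule.mem_bot K).mp hs, map_zero]; exact Submodule.zero_mem _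

/-- The automorphism of the polynomial ring attached to an invertible matrix. -/
def coordE (g : GL (Fin n) K) : PS K n ≃ₐ[K] PS K n :=
  AlgEquiv.ofAlgHom (coordM (g : Matrix (Fin n) (Fin n) K))
    (coordM ((g⁻¹ : GL (Fin n) K) : Matrix (Fin n) (Fin n) K))
    (by rw [coordM_comp, ← Units.val_mul, mul_inv_cancel, Units.val_one, coordM_one])
    (by rw [coordM_comp, ← Units.val_mul, inv_mul_cancel, Units.val_one, coordM_one])

theorem coordE_grade (g : GL (Fin n) K) (d : ℤ) :
    polyGrade K n d = (polyGrade K n d).map (coordE g).toLinearEquiv.toLinearMap := by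
  apply le_antisymm
  · intro s hs
    refine ⟨(coordE g).symm s, coordM_grade _ _ _ hs, (coordE g).apply_symm_apply s⟩
  · rintro _ ⟨s, hs, rfl⟩
    exact coordM_grade _ _ _ hs

section theta
variable {N : Type} [AddCommGroup N] [Module K N] [Module (PS K n) N]
  [IsScalarTower K (PS K n) N]
variable {N' : Type} [AddCommGroup N'] [Module K N'] [Module (PS K n) N']
  [IsScalarTower K (PS K n) N']

variable (N) in
theorem barC_succ (i : ℕ) : barC K n N (i + 1) = bG (LinearMap.mul' K (PS K n)) (barC K n N i) :=
  rfl

theorem barC_grade {GN : ℤ → Submodule K N}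
    (hN : ∀ p q, ∀ m ∈ GN p, ∀ s ∈ polyGrade K n q, s • m ∈ GN (p + q)) : ∀ (i : ℕ) (d : ℤ),
    ∀ z ∈ barDGrade K n N GN (i + 1) d, barC K n N i z ∈ barDGrade K n N GN i d
  | 0, d => by
    have : tensorGrade K (polyGrade K n) GN d ≤
        (GN d).comap (TensorProduct.lift (smulBilin K n N)) := by
      refine tensorGrade_le fun p q hpq s hs m hm => ?_
      have := hN q p m hm s hs
      rw [add_comm, hpq] at this
      exact this
    exact this
  | i + 1, d => bG_grade (LinearMap.mul' K (PS K n)) (barC K n N i)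
      (GY := barDGrade K n N GN i) (fun p q m hm s hs => polyGrade_mul p q m s hm hs)
      (barC_grade hN i) d

/-- The transport isomorphism on the tower. -/
def barTheta (e : PS K n ≃ₗ[K] PS K n) (θ : N ≃ₗ[K] N') :
    (i : ℕ) → (barD K n N i ≃ₗ[K] barD K n N' i)
  | 0 => θ
  | i + 1 => TensorProduct.congr e (barTheta e θ i)

theorem barTheta_grade (e : PS K n ≃ₗ[K] PS K n) (θ : N ≃ₗ[K] N')
    (he : ∀ d, polyGrade K n d = (polyGrade K n d).map e.toLinearMap)
    {GN : ℤ → Submodule K N} {GN' : ℤ → Submodule K N'}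
    (hθ : ∀ d, GN' d = (GN d).map θ.toLinearMap) : ∀ (i : ℕ) (d : ℤ),
    barDGrade K n N' GN' i d = (barDGrade K n N GN i d).map (barTheta e θ i).toLinearMap
  | 0 => hθ
  | i + 1 => tensorGrade_congr e (barTheta e θ i) he (barTheta_grade e θ he hθ i)

theorem barTheta_C (e : PS K n ≃ₐ[K] PS K n) (θ : N ≃ₗ[K] N')
    (h : ∀ (s : PS K n) x, θ (s • x) = e s • θ x) : ∀ (i : ℕ) (z : barD K n N (i + 1)),
    barC K n N' i (barTheta e.toLinearEquiv θ (i + 1) z) =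
      barTheta e.toLinearEquiv θ i (barC K n N i z)
  | 0 => by
    have : (TensorProduct.lift (smulBilin K n N')).comp
        (TensorProduct.congr e.toLinearEquiv θ).toLinearMap =
        θ.toLinearMap.comp (TensorProduct.lift (smulBilin K n N)) := by
      apply TensorProduct.ext'
      intro s x
      exact (h s x).symm
    exact LinearMap.congr_fun this
  | i + 1 => bG_congr (LinearMap.mul' K (PS K n)) (LinearMap.mul' K (PS K n))
      (barC K n N i) (barC K n N' i) e.toLinearEquiv e.toLinearEquiv
      (barTheta e.toLinearEquiv θ i) (fun m s => (map_mul e m s).symm) (barTheta_C e θ h i)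

/-- Existence of bases adapted to the gradings on the tower. -/
theorem barD_ad {GN : ℤ → Submodule K N} {ι : Type} {deg : ι → ℤ} (h : AdBasis GN ι deg) :
    ∀ i : ℕ, ∃ (κ : Type) (dg : κ → ℤ), Nonempty (AdBasis (barDGrade K n N GN i) κ dg)
  | 0 => ⟨ι, deg, ⟨h⟩⟩
  | i + 1 => by
    obtain ⟨κ, dg, ⟨h'⟩⟩ := barD_ad h i
    exact ⟨_, _, ⟨(polyAd K n).tensor h'⟩⟩

variable {M : Type} [AddCommGroup M] [Module K M] [Module (PS K n) M]
  [IsScalarTower K (PS K n) M]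

variable (N M) in
/-- The twisted differential on the tower. -/
def tw (g : GL (Fin n) K) (i : ℕ) :
    (M ⊗[K] (barD K n N (i + 1))) →ₗ[K] (M ⊗[K] (barD K n N i)) :=
  bG (actM M (g : Matrix (Fin n) (Fin n) K)) (barC K n N i)

theorem tw_theta (g : GL (Fin n) K) (θ : N ≃ₗ[K] N')
    (h : ∀ (s : PS K n) x, θ (s • x) = coordE g s • θ x) (i : ℕ)
    (z : M ⊗[K] (barD K n N (i + 1))) :
    barB K n N' M i (TensorProduct.congr (LinearEquiv.refl K M)
      (barTheta (coordE g).toLinearEquiv θ (i + 1)) z) =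
    TensorProduct.congr (LinearEquiv.refl K M) (barTheta (coordE g).toLinearEquiv θ i)
      (tw N M g i z) :=
  bG_congr (actM M (g : Matrix (Fin n) (Fin n) K)) (smulMapM K n M) (barC K n N i)
    (barC K n N' i) (LinearEquiv.refl K M) (coordE g).toLinearEquiv
    (barTheta (coordE g).toLinearEquiv θ i) (fun m s => rfl) (barTheta_C (coordE g) θ h i) z

theorem tens_theta_grade (g : GL (Fin n) K) (θ : N ≃ₗ[K] N') (GM : ℤ → Submodule K M)
    {GN : ℤ → Submodule K N} {GN' : ℤ → Submodule K N'}
    (hθ : ∀ d, GN' d = (GN d).map θ.toLinearMap) (i : ℕ) (d : ℤ) :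
    tensorGrade K GM (barDGrade K n N' GN' i) d = (tensorGrade K GM (barDGrade K n N GN i) d).map
      (TensorProduct.congr (LinearEquiv.refl K M)
        (barTheta (coordE g).toLinearEquiv θ i)).toLinearMap :=
  tensorGrade_congr _ _ (fun d => by simp)
    (barTheta_grade (coordE g).toLinearEquiv θ (coordE_grade g) hθ i) d

variable (N M) in
/-- The twisted strand dimension. -/
def twTor (g : GL (Fin n) K) (GM : ℤ → Submodule K M) (GN : ℤ → Submodule K N) : ℕ → ℤ → ℕ
  | 0, j =>
      Module.finrank K ↥(tensorGrade K GM (barDGrade K n N GN 0) j) -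
        Module.finrank K
          ↥(LinearMap.range (tw N M g 0) ⊓ tensorGrade K GM (barDGrade K n N GN 0) j)
  | (i + 1), j =>
      Module.finrank K
          ↥(LinearMap.ker (tw N M g i) ⊓
              tensorGrade K GM (barDGrade K n N GN (i + 1)) j) -
        Module.finrank K
          ↥(LinearMap.range (tw N M g (i + 1)) ⊓
              tensorGrade K GM (barDGrade K n N GN (i + 1)) j)

theorem tor_eq_twTor (g : GL (Fin n) K) (θ : N ≃ₗ[K] N')
    (h : ∀ (s : PS K n) x, θ (s • x) = coordE g s • θ x) (GM : ℤ → Submodule K M)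
    {GN : ℤ → Submodule K N} {GN' : ℤ → Submodule K N'}
    (hθ : ∀ d, GN' d = (GN d).map θ.toLinearMap) (i : ℕ) (j : ℤ) :
    torStrandDim K n N' M GM GN' i j = twTor N M g GM GN i j := by
  cases i with
  | zero =>
    refine congr_arg₂ (fun a b : ℕ => a - b) ?_ ?_
    · rw [tens_theta_grade g θ GM hθ]
      exact LinearEquiv.finrank_map_eq _ _
    · exact finrank_range_inf_congr _ _ _ _ (tw_theta g θ h 0) _ _
        (tens_theta_grade g θ GM hθ 0 j)
  | succ i =>
    refine congr_arg₂ (fun a b : ℕ => a - b) ?_ ?_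
    · exact finrank_ker_inf_congr _ _ _ _ (tw_theta g θ h i) _ _
        (tens_theta_grade g θ GM hθ (i + 1) j)
    · exact finrank_range_inf_congr _ _ _ _ (tw_theta g θ h (i + 1)) _ _
        (tens_theta_grade g θ GM hθ (i + 1) j)

end theta

theorem exists_theta (g : GL (Fin n) K) (J : Ideal (PS K n)) :
    ∃ θ : (PS K n ⧸ J) ≃ₗ[K] (PS K n ⧸ Ideal.map (coordChange K n g) J),
      (∀ (s : PS K n) x, θ (s • x) = coordE g s • θ x) ∧
      ∀ d, quotGrade K n (Ideal.map (coordChange K n g) J) d =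
        (quotGrade K n J d).map θ.toLinearMap := by
  let φ := Ideal.quotientEquivAlg J (Ideal.map (coordChange K n g) J) (coordE g) rfl
  have hφ : ∀ f, φ (Ideal.Quotient.mk J f) = Ideal.Quotient.mk _ (coordE g f) := fun f => rfl
  refine ⟨φ.toLinearEquiv, ?_, ?_⟩
  · intro s x
    obtain ⟨f, rfl⟩ := Ideal.Quotient.mk_surjective x
    exact map_mul φ (Ideal.Quotient.mk J s) (Ideal.Quotient.mk J f)
  · intro d
    unfold quotGrade
    rw [← Submodule.map_comp]
    conv_lhs => rw [coordE_grade g d, ← Submodule.map_comp]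
    rfl

end Transport

section Vanish

variable {K} {n}

variable (K n) in
/-- The augmentation of the polynomial ring. -/
def aug : PS K n →ₗ[K] K := MvPolynomial.lcoeff K 0

variable (K n) in
/-- The projection onto the augmentation ideal. -/
def augP : PS K n →ₗ[K] PS K n := LinearMap.id - (aug K n).smulRight 1

theorem augP_apply (s : PS K n) : augP K n s = s - aug K n s • (1 : PS K n) := rfl

theorem aug_one : aug K n 1 = 1 := by simp [aug]

theorem aug_mul (s t : PS K n) : aug K n (s * t) = aug K n s * aug K n t := by
  simp [aug, ← constantCoeff_eq]

theorem augP_one : augP K n 1 = 0 := by rw [augP_apply, aug_one, one_smul, sub_self]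

theorem augP_of_aug {s : PS K n} (h : aug K n s = 0) : augP K n s = s := by
  rw [augP_apply, h, zero_smul, sub_zero]

theorem aug_augP (s : PS K n) : aug K n (augP K n s) = 0 := by
  rw [augP_apply, map_sub, map_smul, aug_one]; simp

theorem augP_grade {p : ℤ} (hp : p ≤ 0) {s : PS K n} (hs : s ∈ polyGrade K n p) :
    augP K n s = 0 := by
  unfold polyGrade at hs
  split_ifs at hs with h
  · obtain rfl : p = 0 := le_antisymm hp h
    have h2 : IsHomogeneous s 0 := hs
    rw [← MvPolynomial.totalDegree_zero_iff_isHomogeneous, totalDegree_eq_zero_iff_eq_C] at h2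
    rw [h2, augP_apply]
    simp [aug, smul_eq_C_mul]
  · rw [(Submodule.mem_bot K).mp hs, map_zero]

section abs
variable {Y : Type} [AddCommGroup Y] [Module K Y]

/-- One step of the recursive construction of the homotopy. -/
def nextH (H : Y →ₗ[K] PS K n ⊗[K] Y) : PS K n ⊗[K] Y →ₗ[K] PS K n ⊗[K] (PS K n ⊗[K] Y) :=
  TensorProduct.lift ((aug K n).smulRight
    ((TensorProduct.mk K (PS K n) _ 1).comp (TensorProduct.mk K (PS K n) Y 1)))
    - TensorProduct.map (augP K n) H

theorem nextH_tmul (H : Y →ₗ[K] PS K n ⊗[K] Y) (s : PS K n) (y : Y) :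
    nextH H (s ⊗ₜ y) = aug K n s • (1 ⊗ₜ (1 ⊗ₜ y)) - augP K n s ⊗ₜ H y := rfl

theorem nextH_one (H : Y →ₗ[K] PS K n ⊗[K] Y) (y : Y) :
    nextH H (1 ⊗ₜ y) = 1 ⊗ₜ (1 ⊗ₜ y) := by
  rw [nextH_tmul, aug_one, augP_one, one_smul, zero_tmul, sub_zero]

theorem nextH_aug (H : Y →ₗ[K] PS K n ⊗[K] Y) {s : PS K n} (hs : aug K n s = 0) (y : Y) :
    nextH H (s ⊗ₜ y) = - s ⊗ₜ H y := by
  rw [nextH_tmul, hs, augP_of_aug hs, zero_smul, zero_sub]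

theorem tens_aug_ext {W : Type} [AddCommGroup W] [Module K W]
    {f g : PS K n ⊗[K] Y →ₗ[K] W} (h1 : ∀ y, f (1 ⊗ₜ y) = g (1 ⊗ₜ y))
    (h2 : ∀ s y, aug K n s = 0 → f (s ⊗ₜ y) = g (s ⊗ₜ y)) : f = g := by
  apply TensorProduct.ext'
  intro s y
  have e : s = augP K n s + aug K n s • (1 : PS K n) := by rw [augP_apply, sub_add_cancel]
  rw [e, add_tmul, map_add, map_add, h2 _ _ (aug_augP s), ← smul_tmul', map_smul, map_smul, h1]

/-- The two identities carried through the recursion. -/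
structure HomotopyStep (c : PS K n ⊗[K] Y →ₗ[K] Y) (c1 : PS K n ⊗[K] (PS K n ⊗[K] Y) →ₗ[K]
    PS K n ⊗[K] Y) (H : Y →ₗ[K] PS K n ⊗[K] Y) (P : Y →ₗ[K] Y) : Prop where
  F : ∀ (s : PS K n) (y : Y), aug K n s = 0 →
    c1 (s ⊗ₜ H y) - H (c (s ⊗ₜ y)) = s ⊗ₜ (y - P y)
  G : ∀ y : Y, 1 ⊗ₜ c (1 ⊗ₜ y) + H (y - c (1 ⊗ₜ y)) = 1 ⊗ₜ y

theorem HomotopyStep.main {M : Type} [AddCommGroup M] [Module K M]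
    {c : PS K n ⊗[K] Y →ₗ[K] Y} {H : Y →ₗ[K] PS K n ⊗[K] Y} {P : Y →ₗ[K] Y}
    (h : HomotopyStep c (bG (LinearMap.mul' K (PS K n)) c) H P)
    (μ : M ⊗[K] PS K n →ₗ[K] M) (hμ : ∀ m, μ (m ⊗ₜ 1) = m) (m : M) (x : PS K n ⊗[K] Y) :
    bG μ (bG (LinearMap.mul' K (PS K n)) c) (m ⊗ₜ nextH H x) +
      TensorProduct.map LinearMap.id H (bG μ c (m ⊗ₜ x)) =
      m ⊗ₜ (x - TensorProduct.map (augP K n) P x) := by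
  set c1 := bG (LinearMap.mul' K (PS K n)) c with hc1
  have key : ((bG μ c1).comp (TensorProduct.mk K M _ m)).comp (nextH H) +
      ((TensorProduct.map LinearMap.id H).comp (bG μ c)).comp (TensorProduct.mk K M _ m) =
      (TensorProduct.mk K M _ m).comp (LinearMap.id - TensorProduct.map (augP K n) P) := by
    apply tens_aug_ext
    · intro y
      simp only [LinearMap.add_apply, LinearMap.comp_apply, mk_apply, LinearMap.sub_apply,
        LinearMap.id_apply, map_tmul, augP_one, zero_tmul, sub_zero, nextH_one]
      rw [bG_tmul, hμ, hc1, bG_tmul, LinearMap.mul'_apply, one_mul, bG_tmul, hμ,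
        map_sub, map_tmul, map_tmul]
      have hG := congrArg (fun w => m ⊗ₜ[K] w) (h.G y)
      simp only [map_sub, tmul_add, tmul_sub] at hG
      simp only [LinearMap.id_apply, tmul_sub]
      rw [← hG]
      abel
    · intro s y hs
      simp only [LinearMap.add_apply, LinearMap.comp_apply, mk_apply, LinearMap.sub_apply,
        LinearMap.id_apply, map_tmul, augP_of_aug hs, nextH_aug H hs]
      rw [tmul_neg, map_neg, bG_tmul, bG_tmul, map_sub, map_tmul, map_tmul,
        ← tmul_sub, ← h.F s y hs, tmul_sub]
      simp only [LinearMap.id_apply]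
      abel
  exact LinearMap.congr_fun key x

theorem HomotopyStep.next
    {c : PS K n ⊗[K] Y →ₗ[K] Y} {H : Y →ₗ[K] PS K n ⊗[K] Y} {P : Y →ₗ[K] Y}
    (h : HomotopyStep c (bG (LinearMap.mul' K (PS K n)) c) H P) :
    HomotopyStep (bG (LinearMap.mul' K (PS K n)) c)
      (bG (LinearMap.mul' K (PS K n)) (bG (LinearMap.mul' K (PS K n)) c))
      (nextH H) (TensorProduct.map (augP K n) P) where
  F s x hs := by
    rw [← h.main (LinearMap.mul' K (PS K n)) (fun m => by simp) s x]
    have : (nextH H).comp ((bG (LinearMap.mul' K (PS K n)) c).comp (TensorProduct.mk K _ _ s)) =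
        - (TensorProduct.map LinearMap.id H).comp
          ((bG (LinearMap.mul' K (PS K n)) c).comp (TensorProduct.mk K _ _ s)) := by
      apply TensorProduct.ext'
      intro t y
      simp only [LinearMap.comp_apply, mk_apply, LinearMap.neg_apply, bG_tmul, map_sub, map_tmul,
        LinearMap.mul'_apply, LinearMap.id_apply]
      rw [nextH_aug H hs, nextH_aug H (by rw [aug_mul, hs, zero_mul])]
      abel
    have h2 := LinearMap.congr_fun this x
    simp only [LinearMap.comp_apply, mk_apply, LinearMap.neg_apply] at h2
    rw [h2, sub_neg_eq_add]
  G y := by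
    have e : ∀ y : PS K n ⊗[K] Y, bG (LinearMap.mul' K (PS K n)) c (1 ⊗ₜ y) = y - 1 ⊗ₜ c y := by
      have : (bG (LinearMap.mul' K (PS K n)) c).comp (TensorProduct.mk K _ _ 1) =
          LinearMap.id - (TensorProduct.mk K _ _ 1).comp c := by
        apply TensorProduct.ext'
        intro t y
        simp
      exact LinearMap.congr_fun this
    rw [e, sub_sub_cancel, nextH_one, tmul_sub, sub_add_cancel]

theorem HomotopyStep.zero [Module (PS K n) Y] [IsScalarTower K (PS K n) Y] :
    HomotopyStep (TensorProduct.lift (smulBilin K n Y))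
      (bG (LinearMap.mul' K (PS K n)) (TensorProduct.lift (smulBilin K n Y))) 0 LinearMap.id where
  F s y hs := by simp
  G y := by
    have : TensorProduct.lift (smulBilin K n Y) (1 ⊗ₜ y) = y := one_smul (PS K n) y
    simp [this]

end abs

section tower
variable {N : Type} [AddCommGroup N] [Module K N] [Module (PS K n) N]
  [IsScalarTower K (PS K n) N]

variable (K n N) in
/-- The normalized projection. -/
def barP : (i : ℕ) → (barD K n N i →ₗ[K] barD K n N i)
  | 0 => LinearMap.id
  | i + 1 => TensorProduct.map (augP K n) (barP i)

variable (K n N) in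
/-- The homotopy. -/
def barH : (i : ℕ) → (barD K n N i →ₗ[K] barD K n N (i + 1))
  | 0 => 0
  | i + 1 => nextH (barH i)

variable (K n N) in
theorem bar_step : ∀ i : ℕ, HomotopyStep (Y := barD K n N i) (barC K n N i)
    (bG (LinearMap.mul' K (PS K n)) (barC K n N i)) (barH K n N i) (barP K n N i)
  | 0 => by
    have := @HomotopyStep.zero K _ n N _ _ _ _
    exact this
  | i + 1 => HomotopyStep.next (bar_step i)

theorem barP_grade {GN : ℤ → Submodule K N} (hN : ∀ d < 0, GN d = ⊥) : ∀ (i : ℕ) (d : ℤ),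
    d < i → barDGrade K n N GN i d ≤ LinearMap.ker (barP K n N i)
  | 0, d, hd => by
    change GN d ≤ _
    rw [hN d (by simpa using hd)]
    exact bot_le
  | i + 1, d, hd => by
    have : tensorGrade K (polyGrade K n) (barDGrade K n N GN i) d ≤
        LinearMap.ker (TensorProduct.map (augP K n) (barP K n N i)) := by
      refine tensorGrade_le fun p q hpq s hs y hy => ?_
      rw [LinearMap.mem_ker, map_tmul]
      by_cases hp : p ≤ 0
      · rw [augP_grade hp hs, zero_tmul]
      · have := LinearMap.mem_ker.mp (barP_grade hN i q (by push_cast at hd; omega) hy)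
        rw [this, tmul_zero]
    exact this

variable {M : Type} [AddCommGroup M] [Module K M] [Module (PS K n) M]
  [IsScalarTower K (PS K n) M]

theorem ker_le_range {GN : ℤ → Submodule K N} (hN : ∀ d < 0, GN d = ⊥)
    {GM : ℤ → Submodule K M} (hM : ∀ d < 0, GM d = ⊥) (g : GL (Fin n) K) (i : ℕ) (j : ℤ)
    (hj : j < i + 1) :
    LinearMap.ker (tw N M g i) ⊓ tensorGrade K GM (barDGrade K n N GN (i + 1)) j ≤
      LinearMap.range (tw N M g (i + 1)) ⊓ tensorGrade K GM (barDGrade K n N GN (i + 1)) j := by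
  refine le_inf ?_ inf_le_right
  rintro z ⟨hz, hg⟩
  have hz' : tw N M g i z = 0 := hz
  have hP : TensorProduct.map (LinearMap.id : M →ₗ[K] M) (barP K n N (i + 1)) z = 0 := by
    have : tensorGrade K GM (barDGrade K n N GN (i + 1)) j ≤
        LinearMap.ker (TensorProduct.map (LinearMap.id : M →ₗ[K] M) (barP K n N (i + 1))) := by
      refine tensorGrade_le fun p q hpq s hs y hy => ?_
      rw [LinearMap.mem_ker, map_tmul]
      by_cases hp : p < 0
      · rw [hM p hp] at hs
        rw [(Submodule.mem_bot K).mp hs]; simp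
      · have := LinearMap.mem_ker.mp (barP_grade hN (i + 1) q (by push_cast; omega) hy)
        rw [this, tmul_zero]
    exact this hg
  have hid : ∀ z, tw N M g (i + 1) (TensorProduct.map LinearMap.id (barH K n N (i + 1)) z) +
      TensorProduct.map LinearMap.id (barH K n N i) (tw N M g i z) =
      z - TensorProduct.map (LinearMap.id : M →ₗ[K] M) (barP K n N (i + 1)) z := by
    intro z
    induction z using TensorProduct.induction_on with
    | zero => simp
    | tmul m x =>
      have := (bar_step K n N i).main (actM M (g : Matrix (Fin n) (Fin n) K))
        (fun m => by simp) m x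
      exact this.trans (tmul_sub _ _ _)
    | add x y hx hy =>
      simp only [map_add]
      rw [add_sub_add_comm, ← hx, ← hy]
      abel
  have h3 := hid z
  rw [hz', map_zero, add_zero, hP, sub_zero] at h3
  exact ⟨_, h3⟩

end tower

end Vanish

section Final

variable {K} {n}

theorem quotGrade_neg (Q : Ideal (PS K n)) (d : ℤ) (hd : d < 0) : quotGrade K n Q d = ⊥ := by
  unfold quotGrade polyGrade
  rw [if_neg (by omega), Submodule.map_bot]

variable {σ : MonomialOrder (Fin n)} {B B' : Set (Fin n →₀ ℕ)} {Q J : Ideal (PS K n)}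

theorem tw_grade (g : GL (Fin n) K) (i : ℕ) (d : ℤ) :
    ∀ z ∈ tensorGrade K (quotGrade K n Q) (barDGrade K n (PS K n ⧸ J) (quotGrade K n J) (i + 1)) d,
      tw (PS K n ⧸ J) (PS K n ⧸ Q) g i z ∈
        tensorGrade K (quotGrade K n Q) (barDGrade K n (PS K n ⧸ J) (quotGrade K n J) i) d :=
  bG_grade (actM (PS K n ⧸ Q) (g : Matrix (Fin n) (Fin n) K)) (barC K n (PS K n ⧸ J) i)
    (GY := barDGrade K n (PS K n ⧸ J) (quotGrade K n J) i)
    (fun p q m hm s hs => quotGrade_smul Q p q m hm _ (coordM_grade _ _ _ hs))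
    (barC_grade (fun p q m hm s hs => quotGrade_smul J p q m hm s hs) i) d

theorem tw_range (h : StdFor σ B Q) (hJ : StdFor σ B' J) (g : GL (Fin n) K) (i : ℕ) (j : ℤ) :
    LinearMap.range (tw (PS K n ⧸ J) (PS K n ⧸ Q) g i) ⊓
        tensorGrade K (quotGrade K n Q) (barDGrade K n (PS K n ⧸ J) (quotGrade K n J) i) j =
      (tensorGrade K (quotGrade K n Q)
        (barDGrade K n (PS K n ⧸ J) (quotGrade K n J) (i + 1)) j).map
        (tw (PS K n ⧸ J) (PS K n ⧸ Q) g i) := by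
  obtain ⟨κ, dg, ⟨h0⟩⟩ := barD_ad (n := n) hJ.ad i
  obtain ⟨κ1, dg1, ⟨h1⟩⟩ := barD_ad (n := n) hJ.ad (i + 1)
  exact AdBasis.range_inf (h.ad.tensor h1) (h.ad.tensor h0) _ (tw_grade g i) j

theorem tw_fd (h : StdFor σ B Q) (hJ : StdFor σ B' J) (i : ℕ) (j : ℤ) :
    FiniteDimensional K (tensorGrade K (quotGrade K n Q)
      (barDGrade K n (PS K n ⧸ J) (quotGrade K n J) i) j) := by
  obtain ⟨κ, dg, ⟨h0⟩⟩ := barD_ad (n := n) hJ.ad i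
  exact (h.ad.tensor h0).fd j

theorem tw_finrank {Q' : Ideal (PS K n)} (h : StdFor σ B Q) (h' : StdFor σ B Q')
    (hJ : StdFor σ B' J) (i : ℕ) (j : ℤ) :
    Module.finrank K (tensorGrade K (quotGrade K n Q)
      (barDGrade K n (PS K n ⧸ J) (quotGrade K n J) i) j) =
    Module.finrank K (tensorGrade K (quotGrade K n Q')
      (barDGrade K n (PS K n ⧸ J) (quotGrade K n J) i) j) := by
  obtain ⟨κ, dg, ⟨h0⟩⟩ := barD_ad (n := n) hJ.ad i
  rw [(h.ad.tensor h0).finrank_eq, (h'.ad.tensor h0).finrank_eq]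

/-- The rank of the `i`-th twisted differential in degree `j`. -/
def twRank (Q J : Ideal (PS K n)) (g : GL (Fin n) K) (i : ℕ) (j : ℤ) : ℕ :=
  Module.finrank K ((tensorGrade K (quotGrade K n Q)
    (barDGrade K n (PS K n ⧸ J) (quotGrade K n J) (i + 1)) j).map
    (tw (PS K n ⧸ J) (PS K n ⧸ Q) g i))

/-- The dimension of the `i`-th chain space in degree `j`. -/
def twDim (Q J : Ideal (PS K n)) (i : ℕ) (j : ℤ) : ℕ :=
  Module.finrank K (tensorGrade K (quotGrade K n Q)
      (barDGrade K n (PS K n ⧸ J) (quotGrade K n J) i) j)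

theorem twTor_zero (h : StdFor σ B Q) (hJ : StdFor σ B' J) (g : GL (Fin n) K) (j : ℤ) :
    twTor (PS K n ⧸ J) (PS K n ⧸ Q) g (quotGrade K n Q) (quotGrade K n J) 0 j =
      twDim Q J 0 j - twRank Q J g 0 j := by
  have := tw_range h hJ g 0 j
  unfold twRank
  rw [← this]
  rfl

theorem twTor_succ (h : StdFor σ B Q) (hJ : StdFor σ B' J) (g : GL (Fin n) K) (i : ℕ) (j : ℤ) :
    twTor (PS K n ⧸ J) (PS K n ⧸ Q) g (quotGrade K n Q) (quotGrade K n J) (i + 1) j =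
      (twDim Q J (i + 1) j - twRank Q J g i j) - twRank Q J g (i + 1) j := by
  have h1 := tw_range h hJ g (i + 1) j
  have := tw_fd h hJ (i + 1) j
  have h2 := finrank_ker_inf_add (tw (PS K n ⧸ J) (PS K n ⧸ Q) g i)
    (tensorGrade K (quotGrade K n Q)
      (barDGrade K n (PS K n ⧸ J) (quotGrade K n J) (i + 1)) j)
  unfold twRank twDim
  rw [← h1, ← h2, Nat.add_sub_cancel]
  rfl

theorem twTor_vanish (h : StdFor σ B Q) (hJ : StdFor σ B' J) (g : GL (Fin n) K) (i : ℕ) (j : ℤ)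
    (hj : j < i + 1) :
    twTor (PS K n ⧸ J) (PS K n ⧸ Q) g (quotGrade K n Q) (quotGrade K n J) (i + 1) j = 0 := by
  have := tw_fd h hJ (i + 1) j
  have h1 := ker_le_range (N := PS K n ⧸ J) (M := PS K n ⧸ Q) (quotGrade_neg J)
    (quotGrade_neg Q) g i j hj
  have h2 := Submodule.finrank_mono h1
  exact Nat.sub_eq_zero_of_le h2

theorem torQQ_eq (Q J : Ideal (PS K n)) (g : GL (Fin n) K) (i : ℕ) (j : ℤ) :
    torQQ K n Q (Ideal.map (coordChange K n g) J) i j =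
      twTor (PS K n ⧸ J) (PS K n ⧸ Q) g (quotGrade K n Q) (quotGrade K n J) i j := by
  obtain ⟨θ, h1, h2⟩ := exists_theta g J
  exact tor_eq_twTor g θ h1 (quotGrade K n Q) h2 i j

theorem rank_step [Infinite K] (σ : MonomialOrder (Fin n))
    (I J : Ideal (PS K n)) (hI : IsHomog K n I) (hJ : IsHomog K n J) (j : ℤ) (i : ℕ) :
    ∃ F : MvPolynomial (Fin n × Fin n) K, F ≠ 0 ∧ ∀ g : GL (Fin n) K,
      MvPolynomial.eval (fun p => (g : Matrix (Fin n) (Fin n) K) p.1 p.2) F ≠ 0 →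
      twRank (initialIdealO K n (fun a b => σ.toSyn a < σ.toSyn b) I) J g i j ≤
        twRank I J g i j := by
  obtain ⟨κ1, dg1, ⟨h1⟩⟩ := barD_ad (n := n) (stdFor_self σ J hJ).ad (i + 1)
  obtain ⟨F, hF, h⟩ := key_rank (stdFor_self σ I hI) (stdFor_initial σ I)
    (fun a ha => not_not.mp ha) (barC K n (PS K n ⧸ J) i) h1 j
  exact ⟨F, hF, fun g hg => h g hg g⟩

theorem main_aux [Infinite K] (j : ℤ) (σ : MonomialOrder (Fin n))
    (I J : Ideal (PS K n)) (hI : IsHomog K n I) (hJ : IsHomog K n J) :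
    generally K n (fun h => ∀ i : ℕ,
      torQQ K n I (Ideal.map (coordChange K n h) J) i j ≤
        torQQ K n (initialIdealO K n (fun a b => σ.toSyn a < σ.toSyn b) I)
          (Ideal.map (coordChange K n h) J) i j) := by
  choose F hF0 hF using rank_step σ I J hI hJ j
  refine ⟨∏ i ∈ Finset.range (j.toNat + 2), F i, Finset.prod_ne_zero_iff.mpr fun i _ => hF0 i, ?_⟩
  intro g hg i
  rw [map_prod, Finset.prod_ne_zero_iff] at hg
  have hr := fun i hi => hF i g (hg i hi)
  have s1 := stdFor_self σ I hI
  have s2 := stdFor_initial σ I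
  have sJ := stdFor_self σ J hJ
  rw [torQQ_eq, torQQ_eq]
  cases i with
  | zero =>
    rw [twTor_zero s1 sJ, twTor_zero s2 sJ]
    have e : twDim I J 0 j = twDim _ J 0 j := tw_finrank s1 s2 sJ 0 j
    have := hr 0 (by simp)
    omega
  | succ i =>
    by_cases hj : j < i + 1
    · rw [twTor_vanish s1 sJ g i j hj]
      exact Nat.zero_le _
    · rw [twTor_succ s1 sJ, twTor_succ s2 sJ]
      have e : twDim I J (i + 1) j = twDim _ J (i + 1) j := tw_finrank s1 s2 sJ (i + 1) j
      have h1 := hr i (by rw [Finset.mem_range]; omega)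
      have h2 := hr (i + 1) (by rw [Finset.mem_range]; omega)
      omega

end Final

/-- **Remark 2.7** (Caviglia–Murai; cf. Conca, Question 6.1): fix `j`, homogeneous ideals
`I, J ⊆ S` and any term order `>_σ` on the monomials of `S`.  For a general change of
coordinates `h ∈ GL_n(K)`,
`dim_K Tor_i(S/I, S/h(J))_j ≤ dim_K Tor_i(S/in_σ(I), S/h(J))_j` for all `i`. -/
theorem tor_dim_general_le_initial_term_order [Infinite K] (j : ℤ)
    (σ : MonomialOrder (Fin n))
    (I J : Ideal (PS K n)) (hI : IsHomog K n I) (hJ : IsHomog K n J) :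
    generally K n (fun h => ∀ i : ℕ,
      torQQ K n I (Ideal.map (coordChange K n h) J) i j ≤
        torQQ K n (initialIdealO K n (fun a b => σ.toSyn a < σ.toSyn b) I)
          (Ideal.map (coordChange K n h) J) i j) := by
  exact main_aux j σ I J hI hJ

end
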